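/- Let d ≥ 2 and let r₁,…,r_d be positive integers with ∑_{i=1}^d 1/r_i = 1. Then there exists a constant C < ∞ (depending only on d and r₁,…,r_d) such that for every function f : ℝ^d → ℂ which is max_j r_j times continuously differentiable, with f ∈ L¹(ℝ^d) and with the pure partial derivatives ∂^{r_j} f/∂x_j^{r_j} ∈ L¹(ℝ^d) for each j = 1,…,d, the Fourier transform f̂ of f satisfies ‖f̂‖_{L¹(ℝ^d)} ≤ C ∑_{j=1}^d ‖∂^{r_j} f/∂x_j^{r_j}‖_{L¹(ℝ^d)}. -/

import Mathlib

open MeasureTheory Metric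
open scoped RealInnerProductSpace ENNReal

open Set Function fwdDiff FourierTransform
open scoped NNReal

/-!
Choose an expanding dilation with factors `a₁, …, a_d` such that `a_k ^ r_k = ∏ a_k` for all `k`; it
exists because `∑ 1 / r_k = 1`. Its powers decompose the frequencies into pieces on which the `i`-th
entry lies in a shell and the others in balls of the same scale. In all but two directions
`‖f̂‖_∞ ≤ ‖f‖_{L¹}` and the volume of the balls suffice, so the matter is one of functions of two
variables, with a weight at each scale.

For two variables, take the Fourier transform in the first one only. The slices at which the `L¹`
norm of the derivative in the first variable does not exceed its decreasing rearrangement at the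
current scale are estimated in `L²`. A bad slice is replaced by its extrapolation, by a polynomial
in the second variable, from good slices nearby: the extrapolation inherits the bound of the good
slices, the error is controlled by the derivative in the second variable, and the errors at the
different scales are telescoped. The resulting sums over lacunary scales of values of decreasing
rearrangements are bounded by `L¹` norms.
-/

section FiniteDifferences

variable {F : Type*} [NormedAddCommGroup F] {v : ℝ → F}

lemma integrable_iter_fwdDiff (hv : Integrable v) (t : ℝ) (k : ℕ) :
    Integrable ((Δ_[t])^[k] v) := by
  induction k with
  | zero => exact hv
  | succ k ih =>
    rw [iterate_succ_apply']
    exact (ih.comp_add_right t).sub ih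

variable [NormedSpace ℝ F] {n : ℕ}

lemma contDiff_iter_fwdDiff (hv : ContDiff ℝ n v) (t : ℝ) (k : ℕ) :
    ContDiff ℝ n ((Δ_[t])^[k] v) := by
  induction k with
  | zero => exact hv
  | succ k ih =>
    rw [iterate_succ_apply']
    exact (ih.comp (by fun_prop)).sub ih

lemma iteratedDeriv_fwdDiff (hv : ContDiff ℝ n v) (t : ℝ) :
    iteratedDeriv n (Δ_[t] v) = Δ_[t] (iteratedDeriv n v) := by
  ext x
  have hshift : ContDiff ℝ n fun x ↦ v (x + t) := hv.comp (by fun_prop)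
  change iteratedDeriv n (fun x ↦ v (x + t) - v x) x = _
  rw [iteratedDeriv_fun_sub hshift.contDiffAt hv.contDiffAt, iteratedDeriv_comp_add_const]
  rfl

lemma deriv_iter_fwdDiff (hv : ContDiff ℝ 1 v) (t : ℝ) (k : ℕ) :
    deriv ((Δ_[t])^[k] v) = (Δ_[t])^[k] (deriv v) := by
  induction k with
  | zero => rfl
  | succ k ih =>
    rw [iterate_succ_apply', iterate_succ_apply', ← ih]
    simpa using iteratedDeriv_fwdDiff (contDiff_iter_fwdDiff (n := 1) (mod_cast hv) t k) t

lemma contDiff_one_iteratedDeriv (hv : ContDiff ℝ (n + 1 : ℕ) v) :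
    ContDiff ℝ 1 (iteratedDeriv n v) := by
  rw [iteratedDeriv_eq_iterate]
  exact ContDiff.iterate_deriv' 1 n (by rwa [add_comm n 1] at hv)

variable [CompleteSpace F]

lemma enorm_fwdDiff_le_lintegral (hv : ContDiff ℝ 1 v) (t x : ℝ) :
    ‖Δ_[t] v x‖ₑ ≤ ∫⁻ τ in Ioc (0 : ℝ) 1, ‖t‖ₑ * ‖deriv v (x + τ * t)‖ₑ := by
  have : Continuous (deriv v) := hv.continuous_deriv le_rfl
  have hderiv (τ : ℝ) :
      HasDerivAt (fun τ : ℝ ↦ v (x + τ * t)) (t • deriv v (x + τ * t)) τ := by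
    have hline : HasDerivAt (fun τ : ℝ ↦ x + τ * t) t τ := by
      simpa using ((hasDerivAt_id τ).mul_const t).const_add x
    exact (hv.differentiable one_ne_zero _).hasDerivAt.scomp τ hline
  have hftc : Δ_[t] v x = ∫ τ in Ioc (0 : ℝ) 1, t • deriv v (x + τ * t) := by
    rw [← intervalIntegral.integral_of_le zero_le_one,
      intervalIntegral.integral_eq_sub_of_hasDerivAt (fun τ _ ↦ hderiv τ)
        (Continuous.intervalIntegrable (by fun_prop) _ _)]
    simp [fwdDiff]
  simpa only [hftc, enorm_smul] using
    enorm_integral_le_lintegral_enorm fun τ ↦ t • deriv v (x + τ * t)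

lemma lintegral_enorm_fwdDiff_le (hv : ContDiff ℝ 1 v) (t : ℝ) :
    ∫⁻ x, ‖Δ_[t] v x‖ₑ ≤ ‖t‖ₑ * ∫⁻ x, ‖deriv v x‖ₑ := by
  have hcont : Continuous (deriv v) := hv.continuous_deriv le_rfl
  have hmeas : Measurable (uncurry fun x τ : ℝ ↦ ‖t‖ₑ * ‖deriv v (x + τ * t)‖ₑ) :=
    (Continuous.enorm (hcont.comp (by fun_prop))).measurable.const_mul _
  calc ∫⁻ x, ‖Δ_[t] v x‖ₑ
      ≤ ∫⁻ x, ∫⁻ τ in Ioc (0 : ℝ) 1, ‖t‖ₑ * ‖deriv v (x + τ * t)‖ₑ :=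
        lintegral_mono (enorm_fwdDiff_le_lintegral hv t)
    _ = ∫⁻ τ in Ioc (0 : ℝ) 1, ∫⁻ x, ‖t‖ₑ * ‖deriv v (x + τ * t)‖ₑ :=
        lintegral_lintegral_swap hmeas.aemeasurable
    _ = ∫⁻ _ in Ioc (0 : ℝ) 1, ‖t‖ₑ * ∫⁻ x, ‖deriv v x‖ₑ := by
        refine lintegral_congr fun _ ↦ ?_
        rw [lintegral_const_mul' _ _ enorm_ne_top,
          lintegral_add_right_eq_self (fun x ↦ ‖deriv v x‖ₑ)]
    _ = ‖t‖ₑ * ∫⁻ x, ‖deriv v x‖ₑ := by simp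

lemma lintegral_enorm_iter_fwdDiff_le (k : ℕ) (t : ℝ) (hv : ContDiff ℝ k v) :
    ∫⁻ x, ‖(Δ_[t])^[k] v x‖ₑ ≤ ‖t‖ₑ ^ k * ∫⁻ x, ‖iteratedDeriv k v x‖ₑ := by
  induction k generalizing v with
  | zero => simp
  | succ k ih =>
    have hvk : ContDiff ℝ k v := hv.of_le (mod_cast k.le_succ)
    calc ∫⁻ x, ‖(Δ_[t])^[k] (Δ_[t] v) x‖ₑ
        ≤ ‖t‖ₑ ^ k * ∫⁻ x, ‖Δ_[t] (iteratedDeriv k v) x‖ₑ := by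
          rw [← iteratedDeriv_fwdDiff hvk]
          exact ih (contDiff_iter_fwdDiff hvk t 1)
      _ ≤ ‖t‖ₑ ^ k * (‖t‖ₑ * ∫⁻ x, ‖deriv (iteratedDeriv k v) x‖ₑ) := by
          gcongr
          exact lintegral_enorm_fwdDiff_le (contDiff_one_iteratedDeriv hv) t
      _ = ‖t‖ₑ ^ (k + 1) * ∫⁻ x, ‖iteratedDeriv (k + 1) v x‖ₑ := by
          rw [← mul_assoc, ← pow_succ, iteratedDeriv_succ]

lemma enorm_le_lintegral_enorm_deriv (hv : ContDiff ℝ 1 v) (hint : Integrable v) (x : ℝ) :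
    ‖v x‖ₑ ≤ ∫⁻ y, ‖deriv v y‖ₑ := by
  by_cases htop : ∫⁻ y, ‖deriv v y‖ₑ = ⊤
  · exact htop ▸ le_top
  have hderiv (y : ℝ) (_ : y ∈ Iic x) : HasDerivAt v (deriv v y) y :=
    (hv.differentiable one_ne_zero y).hasDerivAt
  have hint' : Integrable (deriv v) :=
    ⟨(hv.continuous_deriv le_rfl).aestronglyMeasurable, lt_top_iff_ne_top.mpr htop⟩
  have hlim : Filter.Tendsto v Filter.atBot (nhds 0) :=
    tendsto_zero_of_hasDerivAt_of_integrableOn_Iic hderiv hint'.integrableOn hint.integrableOn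
  calc ‖v x‖ₑ = ‖∫ y in Iic x, deriv v y‖ₑ := by
        rw [integral_Iic_of_hasDerivAt_of_tendsto' hderiv hint'.integrableOn hlim, sub_zero]
    _ ≤ ∫⁻ y in Iic x, ‖deriv v y‖ₑ := enorm_integral_le_lintegral_enorm _
    _ ≤ ∫⁻ y, ‖deriv v y‖ₑ := setLIntegral_le_lintegral _ _

lemma enorm_iter_fwdDiff_le (k : ℕ) (t : ℝ) (hv : ContDiff ℝ (k + 1 : ℕ) v)
    (hint : Integrable v) (x : ℝ) :
    ‖(Δ_[t])^[k] v x‖ₑ ≤ ‖t‖ₑ ^ k * ∫⁻ y, ‖iteratedDeriv (k + 1) v y‖ₑ := by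
  have hv1 : ContDiff ℝ 1 v := hv.of_le (mod_cast k.succ_pos)
  have hderiv : ContDiff ℝ k (deriv v) :=
    (contDiff_succ_iff_deriv.mp (show ContDiff ℝ ((k : WithTop ℕ∞) + 1) v from hv)).2.2
  calc ‖(Δ_[t])^[k] v x‖ₑ ≤ ∫⁻ y, ‖(Δ_[t])^[k] (deriv v) y‖ₑ := by
        rw [← deriv_iter_fwdDiff hv1]
        exact enorm_le_lintegral_enorm_deriv
          (mod_cast contDiff_iter_fwdDiff (n := 1) (mod_cast hv1) t k)
          (integrable_iter_fwdDiff hint t k) x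
    _ ≤ ‖t‖ₑ ^ k * ∫⁻ y, ‖iteratedDeriv (k + 1) v y‖ₑ := by
        rw [iteratedDeriv_succ']
        exact lintegral_enorm_iter_fwdDiff_le k t hderiv

end FiniteDifferences

section FourierBounds

variable {V F : Type*} [NormedAddCommGroup V] [InnerProductSpace ℝ V] [MeasurableSpace V]
  [BorelSpace V] [FiniteDimensional ℝ V] [NormedAddCommGroup F] {v : V → F}

lemma enorm_fourier_le [NormedSpace ℂ F] (v : V → F) (ξ : V) : ‖𝓕 v ξ‖ₑ ≤ ∫⁻ x, ‖v x‖ₑ := by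
  have hphase (x : V) : ‖Real.fourierChar (-⟪x, ξ⟫) • v x‖ₑ = ‖v x‖ₑ := by
    simp only [← ofReal_norm, Circle.norm_smul]
  simpa only [Real.fourier_eq, hphase] using
    enorm_integral_le_lintegral_enorm fun x ↦ Real.fourierChar (-⟪x, ξ⟫) • v x

lemma continuous_fourier_of_integrable [NormedSpace ℂ F] (hv : Integrable v) :
    Continuous (𝓕 v) :=
  VectorFourier.fourierIntegral_continuous Real.continuous_fourierChar continuous_inner hv

lemma stronglyMeasurable_fourier [NormedSpace ℂ F] {α : Type*} [MeasurableSpace α] {u : α → V → F}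
    (hu : StronglyMeasurable (uncurry u)) :
    StronglyMeasurable fun z : α × V ↦ 𝓕 (u z.1) z.2 := by
  have hphase : StronglyMeasurable fun z : (α × V) × V ↦ (Real.fourierChar (-⟪z.2, z.1.2⟫) : ℂ) :=
    (by fun_prop : Continuous fun z : V × V ↦ (Real.fourierChar (-⟪z.2, z.1⟫) : ℂ))
      |>.stronglyMeasurable.comp_measurable (measurable_fst.snd.prodMk measurable_snd)
  have hslice : StronglyMeasurable fun z : (α × V) × V ↦ u z.1.1 z.2 :=
    hu.comp_measurable (measurable_fst.fst.prodMk measurable_snd)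
  simpa only [Real.fourier_eq, Circle.smul_def, Pi.smul_apply'] using
    (hphase.smul hslice).integral_prod_right'

lemma fourier_sub_of_integrable [NormedSpace ℂ F] {w : V → F} (hv : Integrable v)
    (hw : Integrable w) : 𝓕 (v - w) = 𝓕 v - 𝓕 w := by
  ext ξ
  simp only [Real.fourier_eq, Pi.sub_apply, smul_sub]
  exact integral_sub ((Real.fourierIntegral_convergent_iff ξ).mpr hv)
    ((Real.fourierIntegral_convergent_iff ξ).mpr hw)

lemma fourier_iter_fwdDiff [NormedSpace ℂ F] {v : ℝ → F} (hv : Integrable v) (t ξ : ℝ) (k : ℕ) :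
    𝓕 ((Δ_[t])^[k] v) ξ = ((Real.fourierChar (t * ξ) : ℂ) - 1) ^ k • 𝓕 v ξ := by
  induction k with
  | zero => simp
  | succ k ih =>
    have hint := integrable_iter_fwdDiff hv t k
    have hshift : 𝓕 (fun x ↦ (Δ_[t])^[k] v (x + t)) ξ
        = (Real.fourierChar (t * ξ) : ℂ) • 𝓕 ((Δ_[t])^[k] v) ξ := by
      simpa [Circle.smul_def, mul_comm] using! congrFun
        (VectorFourier.fourierIntegral_comp_add_right Real.fourierChar volume
          (innerₗ ℝ) ((Δ_[t])^[k] v) t) ξ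
    rw [iterate_succ_apply']
    change 𝓕 ((fun x ↦ (Δ_[t])^[k] v (x + t)) - (Δ_[t])^[k] v) ξ = _
    rw [fourier_sub_of_integrable (hint.comp_add_right t) hint, Pi.sub_apply, hshift, ih, pow_succ',
      mul_smul, sub_smul, one_smul]

-- The step `1 / (2ξ)` turns the `k`-th difference into multiplication by `(-2) ^ k` at `ξ`.
lemma enorm_pow_mul_enorm_fourier_le [NormedSpace ℂ F] [CompleteSpace F] {v : ℝ → F} {k : ℕ}
    (hv : ContDiff ℝ k v) (hint : Integrable v) (ξ : ℝ) :
    ‖ξ‖ₑ ^ k * ‖𝓕 v ξ‖ₑ ≤ ∫⁻ x, ‖iteratedDeriv k v x‖ₑ := by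
  rcases eq_or_ne ξ 0 with rfl | hξ
  · rcases k.eq_zero_or_pos with rfl | hk
    · simpa using enorm_fourier_le v 0
    · simp [hk.ne']
  set t : ℝ := 1 / (2 * ξ)
  have hchar : (Real.fourierChar (t * ξ) : ℂ) - 1 = -2 := by
    have : (2 * Real.pi * (t * ξ) : ℝ) = Real.pi := by simp only [t]; field_simp
    rw [Real.fourierChar_apply, this, Complex.exp_pi_mul_I]
    norm_num
  have hξt : ‖ξ‖ₑ * ‖t‖ₑ ≤ 1 := by
    rw [← enorm_mul, show ξ * t = 1 / 2 by simp only [t]; field_simp, ← ofReal_norm]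
    norm_num
  calc ‖ξ‖ₑ ^ k * ‖𝓕 v ξ‖ₑ ≤ ‖ξ‖ₑ ^ k * ‖𝓕 ((Δ_[t])^[k] v) ξ‖ₑ := by
        gcongr
        rw [fourier_iter_fwdDiff hint, hchar, enorm_smul, enorm_pow]
        refine le_mul_of_one_le_left' (one_le_pow₀ ?_)
        rw [← ofReal_norm]
        norm_num
    _ ≤ ‖ξ‖ₑ ^ k * (‖t‖ₑ ^ k * ∫⁻ x, ‖iteratedDeriv k v x‖ₑ) := by
        gcongr
        exact (enorm_fourier_le _ ξ).trans (lintegral_enorm_iter_fwdDiff_le k t hv)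
    _ = (‖ξ‖ₑ * ‖t‖ₑ) ^ k * ∫⁻ x, ‖iteratedDeriv k v x‖ₑ := by rw [mul_pow, mul_assoc]
    _ ≤ ∫⁻ x, ‖iteratedDeriv k v x‖ₑ := mul_le_of_le_one_left' (pow_le_one' hξt k)

variable [InnerProductSpace ℂ F] [CompleteSpace F]

lemma fourier_ae_eq_fourier_toLp (hv : Integrable v) (hv2 : MemLp v 2) :
    𝓕 v =ᵐ[volume] (𝓕 (hv2.toLp v) : Lp F 2 (volume : Measure V)) := by
  set g : Lp F 2 (volume : Measure V) := 𝓕 (hv2.toLp v)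
  refine ae_eq_of_integral_contDiff_smul_eq
    (continuous_fourier_of_integrable hv).locallyIntegrable
    ((Lp.memLp g).locallyIntegrable one_le_two) fun χ hχ hχsupp ↦ ?_
  have hsupp : HasCompactSupport (Complex.ofRealCLM ∘ χ) := hχsupp.comp_left rfl
  have hsmooth : ContDiff ℝ (⊤ : ℕ∞) (Complex.ofRealCLM ∘ χ) :=
    Complex.ofRealCLM.contDiff.comp hχ
  set φ := hsupp.toSchwartzMap hsmooth
  calc ∫ x, χ x • 𝓕 v x = ∫ x, φ x • 𝓕 v x := by simp [φ]
    _ = ∫ x, (𝓕 φ) x • v x := by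
        simpa using! (VectorFourier.integral_fourierIntegral_smul_eq_flip (L := innerₗ V)
          Real.continuous_fourierChar continuous_inner φ.integrable hv).symm
    _ = ∫ x, (𝓕 φ) x • hv2.toLp v x := by
        refine integral_congr_ae ?_
        filter_upwards [hv2.coeFn_toLp] with x hx
        rw [hx]
    _ = 𝓕 (Lp.toTemperedDistribution (hv2.toLp v)) φ := by simp
    _ = ∫ x, φ x • g x := by rw [Lp.fourier_toTemperedDistribution_eq]; simp [g]
    _ = ∫ x, χ x • g x := by simp [φ]

lemma eLpNorm_fourier_eq (hv : Integrable v) (hv2 : MemLp v 2) :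
    eLpNorm (𝓕 v) 2 = eLpNorm v 2 := by
  rw [eLpNorm_congr_ae (fourier_ae_eq_fourier_toLp hv hv2), ← Lp.enorm_def,
    ← eLpNorm_congr_ae hv2.coeFn_toLp, ← Lp.enorm_def, ← ofReal_norm, Lp.norm_fourier_eq,
    ofReal_norm]

lemma setLIntegral_enorm_fourier_le (hv : Integrable v) (A : Set V) :
    ∫⁻ ξ in A, ‖𝓕 v ξ‖ₑ ≤ eLpNorm v 2 * volume A ^ (1 / 2 : ℝ) := by
  rcases eq_or_ne (volume A) 0 with hA | hA
  · simp [setLIntegral_measure_zero _ _ hA]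
  by_cases hv2 : MemLp v 2
  · have hexp : 1 / (1 : ℝ≥0∞).toReal - 1 / (2 : ℝ≥0∞).toReal = (1 / 2 : ℝ) := by norm_num
    have hCS := eLpNorm_le_eLpNorm_mul_rpow_measure_univ (μ := volume.restrict A) one_le_two
      (continuous_fourier_of_integrable hv).aestronglyMeasurable
    rw [eLpNorm_one_eq_lintegral_enorm, Measure.restrict_apply_univ, hexp] at hCS
    rw [← eLpNorm_fourier_eq hv hv2]
    refine hCS.trans ?_
    gcongr
    exact Measure.restrict_le_self
  · have htop : eLpNorm v 2 = ⊤ := by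
      by_contra h
      exact hv2 ⟨hv.1, lt_top_iff_ne_top.mpr h⟩
    rw [htop, ENNReal.top_mul (by simp [hA])]
    exact le_top

end FourierBounds

section Lacunary

variable {s : ℤ → ℝ≥0∞}

lemma monotone_of_two_mul_le (hs : ∀ n, 2 * s n ≤ s (n + 1)) : Monotone s :=
  monotone_int_of_le_succ fun n ↦ (le_mul_of_one_le_left' one_le_two).trans (hs n)

lemma tsum_indicator_Iic_le (hs : ∀ n, 2 * s n ≤ s (n + 1)) (k : ℤ) :
    ∑' n, (Iic k).indicator s n ≤ 2 * s k := by
  have hdecay (j : ℕ) : s (k - j) ≤ s k * 2⁻¹ ^ j := by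
    rw [← ENNReal.inv_pow, ← div_eq_mul_inv, ENNReal.le_div_iff_mul_le (by simp) (by simp)]
    induction j with
    | zero => simp
    | succ j ih =>
      refine le_trans ?_ ih
      have h := hs (k - (j + 1 : ℕ))
      rw [show k - ((j + 1 : ℕ) : ℤ) + 1 = k - j by push_cast; ring] at h
      rw [pow_succ', ← mul_assoc, mul_comm _ 2]
      gcongr
  have hinj : Injective fun j : ℕ ↦ k - (j : ℤ) := fun i j h ↦ by simpa using h
  have hsupp : support ((Iic k).indicator s) ⊆ range fun j : ℕ ↦ k - (j : ℤ) := fun n hn ↦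
    ⟨(k - n).toNat, by grind [show n ∈ Iic k from mem_of_indicator_ne_zero hn]⟩
  calc ∑' n, (Iic k).indicator s n = ∑' j : ℕ, s (k - j) := by
        rw [← hinj.tsum_eq hsupp]
        exact tsum_congr fun j ↦ indicator_of_mem (by simp) s
    _ ≤ ∑' j : ℕ, s k * 2⁻¹ ^ j := ENNReal.tsum_le_tsum hdecay
    _ = 2 * s k := by
        rw [ENNReal.tsum_mul_left, ENNReal.tsum_geometric, ENNReal.one_sub_inv_two, inv_inv,
          mul_comm]

lemma tsum_indicator_lt_le (hs : ∀ n, 2 * s n ≤ s (n + 1)) (M : ℝ≥0∞) :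
    ∑' n, {n | s n < M}.indicator s n ≤ 2 * M := by
  classical
  rw [ENNReal.tsum_eq_iSup_sum]
  refine iSup_le fun T ↦ (Finset.sum_indicator_eq_sum_filter T (fun _ ↦ s)
    (fun _ ↦ {n | s n < M}) id).trans_le ?_
  set T' := T.filter (id · ∈ {n | s n < M})
  rcases T'.eq_empty_or_nonempty with hT | hT
  · simp [hT]
  set k := T'.max' hT
  have hk : s k < M := (Finset.mem_filter.mp (T'.max'_mem hT)).2
  calc ∑ n ∈ T', s n = ∑ n ∈ T', (Iic k).indicator s n :=
        Finset.sum_congr rfl fun n hn ↦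
          (indicator_of_mem (show n ∈ Iic k from T'.le_max' n hn) s).symm
    _ ≤ ∑' n, (Iic k).indicator s n := ENNReal.sum_le_tsum T'
    _ ≤ 2 * s k := tsum_indicator_Iic_le hs k
    _ ≤ 2 * M := by gcongr

end Lacunary

section Rearrangement

variable {α : Type*} [MeasurableSpace α] {μ : Measure α} {φ : α → ℝ≥0∞}

/-- The decreasing rearrangement `φ*(t)` of `φ`: the least level `l` such that `{φ > l}` has
measure at most `t`. -/
noncomputable def decrRearr (μ : Measure α) (φ : α → ℝ≥0∞) (t : ℝ≥0∞) : ℝ≥0∞ :=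
  sInf {l | μ {x | l < φ x} ≤ t}

lemma antitone_decrRearr : Antitone (decrRearr μ φ) :=
  fun _ _ h ↦ sInf_le_sInf fun _ hl ↦ le_trans hl h

lemma measure_decrRearr_lt_le (t : ℝ≥0∞) : μ {x | decrRearr μ φ t < φ x} ≤ t := by
  obtain ⟨u, hu, hlim, hmem⟩ := exists_seq_tendsto_sInf
    (S := {l | μ {x | l < φ x} ≤ t}) ⟨⊤, by simp⟩ (OrderBot.bddBelow _)
  have hcover : {x | decrRearr μ φ t < φ x} ⊆ ⋃ n, {x | u n < φ x} := fun x hx ↦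
    mem_iUnion.mpr (hlim.eventually (gt_mem_nhds hx)).exists
  have hmono : Monotone fun n ↦ {x | u n < φ x} := fun _ _ hnm _ hx ↦ (hu hnm).trans_lt hx
  calc μ {x | decrRearr μ φ t < φ x} ≤ μ (⋃ n, {x | u n < φ x}) := measure_mono hcover
    _ = ⨆ n, μ {x | u n < φ x} := hmono.measure_iUnion
    _ ≤ t := iSup_le hmem

lemma lt_measure_of_lt_decrRearr {t l : ℝ≥0∞} (h : l < decrRearr μ φ t) :
    t < μ {x | l < φ x} := by
  by_contra! hle
  exact (sInf_le (show l ∈ {l | μ {x | l < φ x} ≤ t} from hle)).not_gt h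

lemma volume_restrict_Ioi_ofReal_lt (l : ℝ≥0∞) :
    volume.restrict (Ioi (0 : ℝ)) {t | ENNReal.ofReal t < l} = l := by
  rw [Measure.restrict_apply (measurableSet_lt ENNReal.measurable_ofReal measurable_const)]
  rcases eq_or_ne l ⊤ with rfl | hl
  · simp
  have hIoo : {t : ℝ | ENNReal.ofReal t < l} ∩ Ioi 0 = Ioo 0 l.toReal := by
    ext t
    simp only [mem_inter_iff, mem_ofPred_eq, mem_Ioi, mem_Ioo, and_comm (a := _ < l)]
    exact and_congr_right fun ht ↦ ENNReal.ofReal_lt_iff_lt_toReal ht.le hl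
  rw [hIoo, Real.volume_Ioo, sub_zero, ENNReal.ofReal_toReal hl]

lemma lintegral_eq_lintegral_measure_ofReal_lt [SFinite μ] (hφ : Measurable φ) :
    ∫⁻ x, φ x ∂μ = ∫⁻ t in Ioi (0 : ℝ), μ {x | ENNReal.ofReal t < φ x} := by
  have hmeas : MeasurableSet {z : α × ℝ | ENNReal.ofReal z.2 < φ z.1} :=
    measurableSet_lt (by fun_prop) (hφ.comp measurable_fst)
  calc ∫⁻ x, φ x ∂μ
      = ∫⁻ x, volume.restrict (Ioi (0 : ℝ)) {t | ENNReal.ofReal t < φ x} ∂μ := by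
        simp only [volume_restrict_Ioi_ofReal_lt]
    _ = μ.prod (volume.restrict (Ioi 0)) {z | ENNReal.ofReal z.2 < φ z.1} :=
        (Measure.prod_apply hmeas).symm
    _ = ∫⁻ t in Ioi (0 : ℝ), μ {x | ENNReal.ofReal t < φ x} := Measure.prod_apply_symm hmeas

lemma tsum_mul_decrRearr_le [SFinite μ] (hφ : Measurable φ) {s : ℤ → ℝ≥0∞}
    (hs : ∀ n, 2 * s n ≤ s (n + 1)) :
    ∑' n, s n * decrRearr μ φ (s n) ≤ 2 * ∫⁻ x, φ x ∂μ := by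
  have hmeas (n : ℤ) : MeasurableSet {t : ℝ | ENNReal.ofReal t < decrRearr μ φ (s n)} :=
    measurableSet_lt ENNReal.measurable_ofReal measurable_const
  calc ∑' n, s n * decrRearr μ φ (s n)
      = ∑' n, ∫⁻ t in Ioi (0 : ℝ),
          {t | ENNReal.ofReal t < decrRearr μ φ (s n)}.indicator (fun _ ↦ s n) t := by
        refine tsum_congr fun n ↦ ?_
        rw [lintegral_indicator_const (hmeas n), volume_restrict_Ioi_ofReal_lt]
    _ = ∫⁻ t in Ioi (0 : ℝ), ∑' n,
          {t | ENNReal.ofReal t < decrRearr μ φ (s n)}.indicator (fun _ ↦ s n) t :=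
        (lintegral_tsum fun n ↦ (measurable_const.indicator (hmeas n)).aemeasurable).symm
    _ ≤ ∫⁻ t in Ioi (0 : ℝ), 2 * μ {x | ENNReal.ofReal t < φ x} := by
        refine lintegral_mono fun t ↦ le_trans (ENNReal.tsum_le_tsum fun n ↦ ?_)
          (tsum_indicator_lt_le hs _)
        by_cases ht : ENNReal.ofReal t < decrRearr μ φ (s n)
        · simp [ht, lt_measure_of_lt_decrRearr ht]
        · simp [ht]
    _ = 2 * ∫⁻ x, φ x ∂μ := by
        rw [lintegral_const_mul' _ _ ENNReal.ofNat_ne_top,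
          ← lintegral_eq_lintegral_measure_ofReal_lt hφ]

lemma exists_decrRearr_lt [SFinite μ] (hφ : Measurable φ) (hint : ∫⁻ x, φ x ∂μ ≠ ⊤)
    {s : ℤ → ℝ≥0∞} (hs : ∀ n, 2 * s n ≤ s (n + 1)) {n : ℤ} (hn : s n ≠ 0)
    {ε : ℝ≥0∞} (hε : ε ≠ 0) : ∃ j : ℕ, decrRearr μ φ (s (n + j)) < ε := by
  by_contra! hle
  have hinj : Injective fun j : ℕ ↦ n + (j : ℤ) := fun i j h ↦ by simpa using h
  have hinfinite : ∑' j : ℕ, s (n + j) * decrRearr μ φ (s (n + j)) = ⊤ := by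
    refine top_le_iff.mp ?_
    rw [← ENNReal.tsum_const_eq_top_of_ne_zero (α := ℕ) (mul_ne_zero hn hε)]
    refine ENNReal.tsum_le_tsum fun j ↦ mul_le_mul' (monotone_of_two_mul_le hs (by simp)) (hle j)
  have hfinite : ∑' k, s k * decrRearr μ φ (s k) ≠ ⊤ :=
    ne_top_of_le_ne_top (by finiteness) (tsum_mul_decrRearr_le hφ hs)
  exact hfinite (top_le_iff.mp (hinfinite ▸ ENNReal.tsum_comp_le_tsum_of_injective hinj
    fun k ↦ s k * decrRearr μ φ (s k)))

lemma eLpNorm_two_pow_two (f : α → ℝ≥0∞) : eLpNorm f 2 μ ^ 2 = ∫⁻ x, f x ^ 2 ∂μ := by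
  simpa using eLpNorm_nnreal_pow_eq_lintegral (f := f) (μ := μ) (p := 2) two_ne_zero

lemma eLpNorm_two_const_mul {f : α → ℝ≥0∞} (hf : Measurable f) (c : ℝ≥0∞) :
    eLpNorm (fun x ↦ c * f x) 2 μ = c * eLpNorm f 2 μ := by
  apply (ENNReal.pow_right_strictMono two_ne_zero).injective
  simp only [mul_pow, eLpNorm_two_pow_two, lintegral_const_mul _ (hf.pow_const 2)]

lemma eLpNorm_two_le_of_enorm_le_add_indicator {F : Type*} [NormedAddCommGroup F] {f : α → F}
    {g : α → ℝ≥0∞} (hg : Measurable g) {V : Set α} (hV : MeasurableSet V) {b E : ℝ≥0∞}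
    (hVb : μ V ≤ b ^ 2) (hf : ∀ᵐ x ∂μ, ‖f x‖ₑ ≤ g x + V.indicator (fun _ ↦ E) x) :
    eLpNorm f 2 μ ≤ eLpNorm g 2 μ + E * b :=
  calc eLpNorm f 2 μ
      ≤ eLpNorm (g + V.indicator fun _ ↦ E) 2 μ :=
        eLpNorm_mono_enorm_ae (hf.mono fun x hx ↦ by rwa [enorm_eq_self])
    _ ≤ eLpNorm g 2 μ + eLpNorm (V.indicator fun _ ↦ E) 2 μ :=
        eLpNorm_add_le hg.aestronglyMeasurable
          (measurable_const.indicator hV).aestronglyMeasurable one_le_two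
    _ ≤ eLpNorm g 2 μ + E * b := by
        rw [eLpNorm_indicator_const hV two_ne_zero ENNReal.ofNat_ne_top, enorm_eq_self]
        gcongr
        rwa [ENNReal.toReal_ofNat, one_div, ENNReal.rpow_inv_le_iff two_pos, ENNReal.rpow_two]

lemma min_sq_le_tsum_indicator {l : ℤ → ℝ≥0∞} {n : ℤ} {a : ℝ≥0∞}
    (hex : ∃ j : ℕ, l (n + j + 1) < a) :
    min a (l n) ^ 2 ≤ ∑' k, {k | n ≤ k ∧ l (k + 1) < a}.indicator (fun k ↦ l k ^ 2) k := by
  classical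
  set j := Nat.find hex
  have hmin : min a (l n) ≤ l (n + j) := by
    rcases Nat.eq_zero_or_pos j with hj | hj
    · simp [hj]
    · have hprev := not_lt.mp (Nat.find_min hex (m := j - 1) (Nat.sub_lt hj one_pos))
      rw [show n + ((j - 1 : ℕ) : ℤ) + 1 = n + j by omega] at hprev
      exact (min_le_left _ _).trans hprev
  have hmem : n + (j : ℤ) ∈ {k | n ≤ k ∧ l (k + 1) < a} := ⟨by simp, Nat.find_spec hex⟩
  calc min a (l n) ^ 2 ≤ l (n + j) ^ 2 := by gcongr
    _ = {k | n ≤ k ∧ l (k + 1) < a}.indicator (fun k ↦ l k ^ 2) (n + j) :=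
        (indicator_of_mem hmem (fun k ↦ l k ^ 2)).symm
    _ ≤ ∑' k, {k | n ≤ k ∧ l (k + 1) < a}.indicator (fun k ↦ l k ^ 2) k :=
        ENNReal.le_tsum (n + (j : ℤ))

variable {b : ℤ → ℝ≥0∞}

lemma two_mul_sq_le_sq (hb : ∀ n, 2 * b n ≤ b (n + 1)) (n : ℤ) :
    2 * b n ^ 2 ≤ b (n + 1) ^ 2 :=
  calc 2 * b n ^ 2 ≤ (2 * b n) ^ 2 := by rw [mul_pow]; gcongr; norm_num
    _ ≤ b (n + 1) ^ 2 := by gcongr; exact hb n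

/- Dyadic decomposition of the truncation: where `φ*(b_{k+1}²) < φ ≤ φ*(b_k²)`, a set of measure at
most `b_{k+1}²`, bound `φ` by `φ*(b_k²)`. -/
lemma eLpNorm_min_decrRearr_le [SFinite μ] (hφ : Measurable φ) (hint : ∫⁻ x, φ x ∂μ ≠ ⊤)
    (hb : ∀ n, 2 * b n ≤ b (n + 1)) (hb0 : ∀ n, b n ≠ 0) (n : ℤ) :
    eLpNorm (fun x ↦ min (φ x) (decrRearr μ φ (b n ^ 2))) 2 μ ≤
      ∑' k, (Ici n).indicator (fun k ↦ decrRearr μ φ (b k ^ 2) * b (k + 1)) k := by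
  set l : ℤ → ℝ≥0∞ := fun k ↦ decrRearr μ φ (b k ^ 2)
  set c : ℤ → ℝ≥0∞ := (Ici n).indicator fun k ↦ l k * b (k + 1)
  have hex (x : α) (hx : φ x ≠ 0) : ∃ j : ℕ, l (n + j + 1) < φ x := by
    obtain ⟨j, hj⟩ := exists_decrRearr_lt hφ hint (two_mul_sq_le_sq hb) (n := n + 1)
      (by simpa using hb0 _) hx
    exact ⟨j, by simpa only [add_right_comm] using hj⟩
  have hmeas (k : ℤ) : MeasurableSet {x | n ≤ k ∧ l (k + 1) < φ x} :=
    (MeasurableSet.const _).inter (measurableSet_lt measurable_const hφ)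
  rw [← ENNReal.pow_le_pow_left_iff two_ne_zero, eLpNorm_two_pow_two]
  calc ∫⁻ x, min (φ x) (l n) ^ 2 ∂μ
      ≤ ∫⁻ x, ∑' k, {x | n ≤ k ∧ l (k + 1) < φ x}.indicator (fun _ ↦ l k ^ 2) x ∂μ := by
        refine lintegral_mono fun x ↦ ?_
        rcases eq_or_ne (φ x) 0 with hx | hx
        · simp [hx]
        · exact min_sq_le_tsum_indicator (hex x hx)
    _ = ∑' k, l k ^ 2 * μ {x | n ≤ k ∧ l (k + 1) < φ x} := by
        rw [lintegral_tsum fun k ↦ (measurable_const.indicator (hmeas k)).aemeasurable]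
        exact tsum_congr fun k ↦ lintegral_indicator_const (hmeas k) _
    _ ≤ ∑' k, c k ^ 2 := by
        refine ENNReal.tsum_le_tsum fun k ↦ ?_
        by_cases hk : n ≤ k
        · simp only [hk, true_and, c, mem_Ici, indicator_of_mem, mul_pow]
          gcongr
          exact measure_decrRearr_lt_le _
        · simp [hk]
    _ ≤ ∑' k, c k * ∑' k, c k := by
        refine ENNReal.tsum_le_tsum fun k ↦ ?_
        rw [sq]
        gcongr
        exact ENNReal.le_tsum k
    _ = (∑' k, c k) ^ 2 := by rw [ENNReal.tsum_mul_right, sq]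

lemma tsum_mul_eLpNorm_min_decrRearr_le [SFinite μ] (hφ : Measurable φ)
    (hb : ∀ n, 2 * b n ≤ b (n + 1)) (hb0 : ∀ n, b n ≠ 0) {B : ℝ≥0∞} (hB : B ≠ 0)
    (hbB : ∀ n, b (n + 1) ≤ B * b n) :
    ∑' n, b n * eLpNorm (fun x ↦ min (φ x) (decrRearr μ φ (b n ^ 2))) 2 μ ≤
      4 * B * ∫⁻ x, φ x ∂μ := by
  by_cases hint : ∫⁻ x, φ x ∂μ = ⊤
  · simp [hint, hB]
  set l : ℤ → ℝ≥0∞ := fun k ↦ decrRearr μ φ (b k ^ 2)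
  calc ∑' n, b n * eLpNorm (fun x ↦ min (φ x) (l n)) 2 μ
      ≤ ∑' n, b n * ∑' k, (Ici n).indicator (fun k ↦ l k * b (k + 1)) k :=
        ENNReal.tsum_le_tsum fun n ↦ by
          gcongr
          exact eLpNorm_min_decrRearr_le hφ hint hb hb0 n
    _ = ∑' k, l k * b (k + 1) * ∑' n, (Iic k).indicator b n := by
        simp_rw [← ENNReal.tsum_mul_left]
        rw [ENNReal.tsum_comm]
        refine tsum_congr fun k ↦ tsum_congr fun n ↦ ?_
        by_cases hnk : n ≤ k
        · simp [hnk, mul_comm]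
        · simp [hnk]
    _ ≤ ∑' k, l k * (B * b k) * (2 * b k) :=
        ENNReal.tsum_le_tsum fun k ↦ by
          gcongr
          exacts [hbB k, tsum_indicator_Iic_le hb k]
    _ = 2 * B * ∑' k, b k ^ 2 * l k := by
        rw [← ENNReal.tsum_mul_left]
        exact tsum_congr fun k ↦ by ring
    _ ≤ 2 * B * (2 * ∫⁻ x, φ x ∂μ) := by
        gcongr
        exact tsum_mul_decrRearr_le hφ (two_mul_sq_le_sq hb)
    _ = 4 * B * ∫⁻ x, φ x ∂μ := by ring

end Rearrangement

section Extrapolation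

lemma exists_enorm_le_forall_add_nsmul_notMem {U : Set ℝ} {S : ℝ≥0} (hS : 0 < S)
    (hU : volume U ≤ S) (k : ℕ) (y : ℝ) :
    ∃ t : ℝ, ‖t‖ₑ ≤ (k + 1) * S ∧ ∀ i < k, y + (i + 1) • t ∉ U := by
  by_contra! hc
  have hsub : Ioc (0 : ℝ) ((k + 1) * S) ⊆ ⋃ i ∈ Finset.range k, {t | y + (i + 1) • t ∈ U} := by
    intro t ht
    have hnorm : ‖t‖ₑ ≤ (k + 1) * S := by
      rw [Real.enorm_of_nonneg ht.1.le]
      exact_mod_cast (ENNReal.ofReal_le_coe (b := (k + 1) * S)).mpr (by exact_mod_cast ht.2)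
    obtain ⟨i, hi, hiU⟩ := hc t hnorm
    exact mem_biUnion (Finset.mem_coe.mpr (Finset.mem_range.mpr hi)) hiU
  have hscale (i : ℕ) : volume {t : ℝ | y + (i + 1) • t ∈ U} ≤ S := by
    have hpre : {t : ℝ | y + (i + 1) • t ∈ U}
        = (fun t ↦ ((i + 1 : ℕ) : ℝ) * t) ⁻¹' ((fun z ↦ y + z) ⁻¹' U) := by
      ext t; simp only [nsmul_eq_mul, mem_ofPred_eq, mem_preimage]
    rw [hpre, Real.volume_preimage_mul_left (by positivity), measure_preimage_add]
    refine (mul_le_of_le_one_left zero_le ?_).trans hU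
    rw [ENNReal.ofReal_le_one, abs_of_nonneg (by positivity)]
    exact inv_le_one_of_one_le₀ (by exact_mod_cast Nat.le_add_left 1 i)
  have hle : ENNReal.ofReal ((k + 1) * S) ≤ ENNReal.ofReal (k * S) :=
    calc ENNReal.ofReal ((k + 1) * S) = volume (Ioc (0 : ℝ) ((k + 1) * S)) := by
          rw [Real.volume_Ioc, sub_zero]
      _ ≤ ∑ i ∈ Finset.range k, volume {t : ℝ | y + (i + 1) • t ∈ U} :=
          (measure_mono hsub).trans (measure_biUnion_finset_le _ _)
      _ ≤ ∑ _i ∈ Finset.range k, (S : ℝ≥0∞) := Finset.sum_le_sum fun i _ ↦ hscale i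
      _ = ENNReal.ofReal (k * S) := by
          rw [Finset.sum_const, Finset.card_range, nsmul_eq_mul, ENNReal.ofReal_mul (by positivity),
            ENNReal.ofReal_natCast, ENNReal.ofReal_coe_nnreal]
  rw [ENNReal.ofReal_le_ofReal_iff (by positivity)] at hle
  have : (0 : ℝ) < S := hS
  linarith

/-- The value at `y` of the polynomial of degree less than `k` interpolating `v` at the points
`y + t, y + 2t, …, y + kt`. -/
def polyExtrapolate {G : Type*} [AddCommGroup G] [Module ℝ G] (k : ℕ) (t : ℝ) (v : ℝ → G) (y : ℝ) :
    G :=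
  ∑ i ∈ Finset.range k, ((-1) ^ i * k.choose (i + 1) : ℝ) • v (y + (i + 1) • t)

lemma sub_polyExtrapolate {G : Type*} [AddCommGroup G] [Module ℝ G] (k : ℕ) (t : ℝ) (v : ℝ → G)
    (y : ℝ) : v y - polyExtrapolate k t v y = (-1 : ℝ) ^ k • (Δ_[t])^[k] v y := by
  have hsign {i : ℕ} (hi : i < k) :
      ((-1 : ℝ) ^ k * ((-1) ^ (k - (i + 1)) * k.choose (i + 1))) =
        -((-1) ^ i * k.choose (i + 1)) := by
    obtain ⟨m, rfl⟩ := Nat.exists_eq_add_of_le (Nat.succ_le_of_lt hi)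
    have hm : ((-1 : ℝ) ^ m) * (-1) ^ m = 1 := by rw [← mul_pow]; simp
    rw [Nat.succ_eq_add_one, Nat.add_sub_cancel_left, pow_add, pow_succ]
    linear_combination (-(-1 : ℝ) ^ i * ((i + 1 + m).choose (i + 1) : ℝ)) * hm
  have hone : ((-1 : ℝ) ^ k * (-1) ^ k) = 1 := by rw [← mul_pow]; simp
  rw [fwdDiff_iter_eq_sum_shift, Finset.sum_range_succ', smul_add, Finset.smul_sum]
  simp only [← Int.cast_smul_eq_zsmul ℝ, smul_smul, Int.cast_mul, Int.cast_pow, Int.cast_neg,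
    Int.cast_one, Int.cast_natCast, Nat.sub_zero, Nat.choose_zero_right, Nat.cast_one, mul_one,
    hone, one_smul, zero_smul, add_zero]
  rw [Finset.sum_congr rfl fun i hi ↦ by rw [hsign (Finset.mem_range.mp hi), neg_smul],
    Finset.sum_neg_distrib, polyExtrapolate, sub_eq_neg_add]

variable {F : Type*} [NormedAddCommGroup F] [NormedSpace ℝ F]

lemma enorm_sub_polyExtrapolate (k : ℕ) (t : ℝ) (v : ℝ → F) (y : ℝ) :
    ‖v y - polyExtrapolate k t v y‖ₑ = ‖(Δ_[t])^[k] v y‖ₑ := by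
  rw [sub_polyExtrapolate, enorm_smul, enorm_pow, enorm_neg, enorm_one, one_pow, one_mul]

lemma enorm_polyExtrapolate_le_sum (k : ℕ) (t : ℝ) (v : ℝ → F) (y : ℝ) :
    ‖polyExtrapolate k t v y‖ₑ ≤
      ∑ i ∈ Finset.range k, (k.choose (i + 1) : ℝ≥0∞) * ‖v (y + (i + 1) • t)‖ₑ := by
  refine (enorm_sum_le _ _).trans_eq (Finset.sum_congr rfl fun i _ ↦ ?_)
  rw [enorm_smul, enorm_mul, enorm_pow, enorm_neg, enorm_one, one_pow, one_mul,
    Real.enorm_natCast]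

lemma sum_choose_succ_mul_le {k : ℕ} {a : ℕ → ℝ≥0∞} {L : ℝ≥0∞} (ha : ∀ i < k, a i ≤ L) :
    ∑ i ∈ Finset.range k, (k.choose (i + 1) : ℝ≥0∞) * a i ≤ 2 ^ k * L := by
  have hchoose : ∑ i ∈ Finset.range k, k.choose (i + 1) ≤ 2 ^ k := by
    have := Nat.sum_range_choose k
    rw [Finset.sum_range_succ'] at this
    omega
  calc ∑ i ∈ Finset.range k, (k.choose (i + 1) : ℝ≥0∞) * a i
      ≤ ∑ i ∈ Finset.range k, (k.choose (i + 1) : ℝ≥0∞) * L :=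
        Finset.sum_le_sum fun i hi ↦ by gcongr; exact ha i (Finset.mem_range.mp hi)
    _ = ((∑ i ∈ Finset.range k, k.choose (i + 1) : ℕ) : ℝ≥0∞) * L := by
        rw [← Finset.sum_mul, Nat.cast_sum]
    _ ≤ 2 ^ k * L := by gcongr; exact_mod_cast hchoose

lemma enorm_polyExtrapolate_le {k : ℕ} {t : ℝ} {v : ℝ → F} {y : ℝ} {L : ℝ≥0∞}
    (hL : ∀ i < k, ‖v (y + (i + 1) • t)‖ₑ ≤ L) : ‖polyExtrapolate k t v y‖ₑ ≤ 2 ^ k * L :=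
  (enorm_polyExtrapolate_le_sum k t v y).trans (sum_choose_succ_mul_le hL)

/-- The function `w` is integrable, `k` times continuously differentiable, and
`‖w^{(k)}‖_{L¹} ≤ l`. -/
structure IsDerivBounded (k : ℕ) (l : ℝ≥0∞) (w : ℝ → F) : Prop where
  contDiff : ContDiff ℝ k w
  integrable : Integrable w
  lintegral_le : ∫⁻ x, ‖iteratedDeriv k w x‖ₑ ≤ l

namespace IsDerivBounded

variable {k n : ℕ} {l l' : ℝ≥0∞} {w w' : ℝ → F}

lemma sub (hw : IsDerivBounded k l w) (hw' : IsDerivBounded k l' w') :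
    IsDerivBounded k (l + l') (w - w') where
  contDiff := hw.contDiff.sub hw'.contDiff
  integrable := hw.integrable.sub hw'.integrable
  lintegral_le :=
    calc ∫⁻ x, ‖iteratedDeriv k (w - w') x‖ₑ
        ≤ ∫⁻ x, (‖iteratedDeriv k w x‖ₑ + ‖iteratedDeriv k w' x‖ₑ) := lintegral_mono fun x ↦ by
          rw [iteratedDeriv_sub hw.contDiff.contDiffAt hw'.contDiff.contDiffAt]
          exact enorm_sub_le
      _ = (∫⁻ x, ‖iteratedDeriv k w x‖ₑ) + ∫⁻ x, ‖iteratedDeriv k w' x‖ₑ :=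
          lintegral_add_left (hw.contDiff.continuous_iteratedDeriv k le_rfl).enorm.measurable _
      _ ≤ l + l' := add_le_add hw.lintegral_le hw'.lintegral_le

lemma extrapolate {u : ℝ → ℝ → F} {t y : ℝ}
    (hu : ∀ i < n, IsDerivBounded k l (u (y + (i + 1) • t))) :
    IsDerivBounded k (2 ^ n * l) (polyExtrapolate n t u y) := by
  have hu' {i : ℕ} (hi : i ∈ Finset.range n) := hu i (Finset.mem_range.mp hi)
  have hsum : polyExtrapolate n t u y = fun x ↦
      ∑ i ∈ Finset.range n, ((-1) ^ i * n.choose (i + 1) : ℝ) • u (y + (i + 1) • t) x := by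
    ext x; simp only [polyExtrapolate, Finset.sum_apply, Pi.smul_apply]
  have hderiv (x : ℝ) : iteratedDeriv k (polyExtrapolate n t u y) x =
      polyExtrapolate n t (fun y ↦ iteratedDeriv k (u y) x) y := by
    rw [hsum, iteratedDeriv_fun_sum fun i hi ↦ ((hu' hi).contDiff.const_smul _).contDiffAt]
    exact Finset.sum_congr rfl fun i hi ↦ iteratedDeriv_const_smul (hu' hi).contDiff.contDiffAt _
  refine ⟨?_, ?_, ?_⟩
  · rw [hsum]
    exact ContDiff.sum fun i hi ↦ (hu' hi).contDiff.const_smul _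
  · rw [hsum]
    exact integrable_finsetSum _ fun i hi ↦ (hu' hi).integrable.smul _
  calc ∫⁻ x, ‖iteratedDeriv k (polyExtrapolate n t u y) x‖ₑ
      ≤ ∫⁻ x, ∑ i ∈ Finset.range n,
          (n.choose (i + 1) : ℝ≥0∞) * ‖iteratedDeriv k (u (y + (i + 1) • t)) x‖ₑ :=
        lintegral_mono fun x ↦ by rw [hderiv]; exact enorm_polyExtrapolate_le_sum _ _ _ _
    _ = ∑ i ∈ Finset.range n,
          (n.choose (i + 1) : ℝ≥0∞) * ∫⁻ x, ‖iteratedDeriv k (u (y + (i + 1) • t)) x‖ₑ := by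
        have hmeas {i : ℕ} (hi : i ∈ Finset.range n) :=
          ((hu' hi).contDiff.continuous_iteratedDeriv k le_rfl).enorm.measurable
        rw [lintegral_finsetSum' _ fun i hi ↦ ((hmeas hi).const_mul _).aemeasurable]
        exact Finset.sum_congr rfl fun i hi ↦ lintegral_const_mul _ (hmeas hi)
    _ ≤ 2 ^ n * l := sum_choose_succ_mul_le fun i hi ↦ (hu i hi).lintegral_le

variable [CompleteSpace F]

/- Off the small set `{ψ > A}` the bound by `M ψ` is already a bound by `M min(ψ, A)`; on it,
compare `D` with its extrapolation from points where `ψ ≤ A`. -/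
lemma enorm_le_min_add_indicator {D : ℝ → F} (hD : IsDerivBounded (k + 1) l D) {ψ : ℝ → ℝ≥0∞}
    {A M : ℝ≥0∞} {h : ℝ≥0} (hh : 0 < h) (hψ : volume {x | A < ψ x} ≤ h)
    (hDψ : ∀ᵐ x, ‖D x‖ₑ ≤ M * ψ x) :
    ∀ᵐ x, ‖D x‖ₑ ≤ 2 ^ k * M * min (ψ x) A +
      {x | A < ψ x}.indicator (fun _ ↦ ((k + 1) * h) ^ k * l) x := by
  filter_upwards [hDψ] with x hx
  rcases lt_or_ge A (ψ x) with hAx | hAx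
  · have hbad : volume ({x | A < ψ x} ∪ {x | ¬ ‖D x‖ₑ ≤ M * ψ x}) ≤ h :=
      (measure_union_le _ _).trans (by rwa [ae_iff.mp hDψ, add_zero])
    obtain ⟨t, ht, hgood⟩ := exists_enorm_le_forall_add_nsmul_notMem hh hbad k x
    have hextr : ‖polyExtrapolate k t D x‖ₑ ≤ 2 ^ k * (M * A) := by
      refine enorm_polyExtrapolate_le fun i hi ↦ ?_
      obtain ⟨hA, hM⟩ := not_or.mp (hgood i hi)
      exact (not_not.mp hM).trans (by gcongr; exact not_lt.mp hA)
    have hdiff : ‖(Δ_[t])^[k] D x‖ₑ ≤ ((k + 1) * h) ^ k * l := by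
      refine (enorm_iter_fwdDiff_le k t hD.contDiff hD.integrable x).trans ?_
      gcongr
      exact hD.lintegral_le
    rw [min_eq_right hAx.le, indicator_of_mem (show x ∈ {x | A < ψ x} from hAx), mul_assoc]
    calc ‖D x‖ₑ = ‖polyExtrapolate k t D x + (D x - polyExtrapolate k t D x)‖ₑ := by
          rw [add_sub_cancel]
      _ ≤ ‖polyExtrapolate k t D x‖ₑ + ‖D x - polyExtrapolate k t D x‖ₑ := enorm_add_le _ _
      _ = ‖polyExtrapolate k t D x‖ₑ + ‖(Δ_[t])^[k] D x‖ₑ := by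
          rw [enorm_sub_polyExtrapolate]
      _ ≤ 2 ^ k * (M * A) + ((k + 1) * h) ^ k * l := add_le_add hextr hdiff
  · rw [min_eq_left hAx, indicator_of_notMem (show x ∉ {x | A < ψ x} from not_lt.mpr hAx), add_zero]
    refine hx.trans ?_
    gcongr
    exact le_mul_of_one_le_left zero_le (one_le_pow₀ one_le_two)

lemma eLpNorm_two_le {D : ℝ → F} (hD : IsDerivBounded (k + 1) l D) {ψ : ℝ → ℝ≥0∞}
    (hψm : Measurable ψ) {A M : ℝ≥0∞} {α : ℝ≥0} (hα : 0 < α)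
    (hψ : volume {x | A < ψ x} ≤ (α : ℝ≥0∞) ^ 2) (hDψ : ∀ᵐ x, ‖D x‖ₑ ≤ M * ψ x) :
    eLpNorm D 2 ≤ 2 ^ k * M * eLpNorm (fun x ↦ min (ψ x) A) 2 +
      ((k + 1) * (α : ℝ≥0∞) ^ 2) ^ k * l * α := by
  have hmin : Measurable fun x ↦ min (ψ x) A := hψm.min measurable_const
  have hbound := hD.enorm_le_min_add_indicator (h := α ^ 2) (pow_pos hα 2)
    (by rwa [ENNReal.coe_pow]) hDψ
  rw [ENNReal.coe_pow] at hbound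
  rw [← eLpNorm_two_const_mul hmin]
  exact eLpNorm_two_le_of_enorm_le_add_indicator (hmin.const_mul _)
    (measurableSet_lt measurable_const hψm) hψ hbound

end IsDerivBounded

end Extrapolation

section Telescoping

variable {F : Type*} [NormedAddCommGroup F]

lemma enorm_le_add_tsum_Iic (g : ℤ → F) {k n : ℤ} (hkn : k ≤ n) :
    ‖g k‖ₑ ≤ ‖g n‖ₑ + ∑' j, (Iic n).indicator (fun j ↦ ‖g (j - 1) - g j‖ₑ) j := by
  induction n, hkn using Int.leInduction with
  | base => exact le_self_add
  | succ n _ ih =>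
    have hstep : ‖g n‖ₑ ≤ ‖g (n + 1)‖ₑ + ‖g (n + 1 - 1) - g (n + 1)‖ₑ := by
      simpa only [add_sub_cancel_right, add_sub_cancel] using
        enorm_add_le (g (n + 1)) (g n - g (n + 1))
    have hIic (j : ℤ) : (Iic (n + 1)).indicator (fun j ↦ ‖g (j - 1) - g j‖ₑ) j =
        (if j = n + 1 then ‖g (j - 1) - g j‖ₑ else 0) +
          (Iic n).indicator (fun j ↦ ‖g (j - 1) - g j‖ₑ) j := by
      simp only [indicator_apply, mem_Iic]
      rcases eq_or_ne j (n + 1) with rfl | hj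
      · simp
      · simp only [hj, if_false, zero_add]
        congr 1
        exact propext ⟨fun h ↦ by omega, fun h ↦ by omega⟩
    simp_rw [hIic]
    rw [ENNReal.tsum_add, tsum_ite_eq, ← add_assoc]
    exact ih.trans (by gcongr)

variable {X : Type*} [MeasurableSpace X] {ν : Measure X} {W : ℤ → ℝ≥0∞} {g : ℤ → X → F}

lemma mul_setLIntegral_enorm_le_add_tsum (hW : Antitone W) (hg : ∀ n, StronglyMeasurable (g n))
    (S : Set X) {k n : ℤ} (hkn : k ≤ n) :
    W n * ∫⁻ x in S, ‖g k x‖ₑ ∂ν ≤ W n * ∫⁻ x in S, ‖g n x‖ₑ ∂ν +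
      ∑' j, (Iic n).indicator (fun j ↦ W j * ∫⁻ x in S, ‖g (j - 1) x - g j x‖ₑ ∂ν) j := by
  set D : ℤ → X → ℝ≥0∞ := fun j x ↦ ‖g (j - 1) x - g j x‖ₑ
  have hD (j : ℤ) : Measurable (D j) := ((hg (j - 1)).sub (hg j)).enorm
  calc W n * ∫⁻ x in S, ‖g k x‖ₑ ∂ν
      ≤ W n * ∫⁻ x in S, (‖g n x‖ₑ + ∑' j, (Iic n).indicator (fun j ↦ D j x) j) ∂ν := by
        gcongr with x
        exact enorm_le_add_tsum_Iic (fun n ↦ g n x) hkn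
    _ = W n * ∫⁻ x in S, ‖g n x‖ₑ ∂ν +
          ∑' j, (Iic n).indicator (fun j ↦ W n * ∫⁻ x in S, D j x ∂ν) j := by
        rw [lintegral_add_left (hg n).enorm, mul_add, lintegral_tsum fun j ↦ ?_,
          ← ENNReal.tsum_mul_left]
        · refine congrArg _ (tsum_congr fun j ↦ ?_)
          by_cases hj : j ∈ Iic n <;> simp [hj]
        · by_cases hj : j ∈ Iic n <;> simp [hj, (hD j).aemeasurable]
    _ ≤ W n * ∫⁻ x in S, ‖g n x‖ₑ ∂ν +
          ∑' j, (Iic n).indicator (fun j ↦ W j * ∫⁻ x in S, D j x ∂ν) j := by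
        refine add_le_add le_rfl (ENNReal.tsum_le_tsum fun j ↦ indicator_le_indicator' fun hj ↦ ?_)
        gcongr
        exact hW hj

lemma tsum_indicator_setLIntegral_le {ι : Type*} [Countable ι] {S : ι → Set X}
    (hS : ∀ n, MeasurableSet (S n)) (hdisj : Pairwise (Disjoint on S)) {I : Set ι} {T : Set X}
    (hST : ∀ n ∈ I, S n ⊆ T) (f : X → ℝ≥0∞) :
    ∑' n, I.indicator (fun n ↦ ∫⁻ x in S n, f x ∂ν) n ≤ ∫⁻ x in T, f x ∂ν := by
  rw [← tsum_subtype I fun n ↦ ∫⁻ x in S n, f x ∂ν,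
    ← lintegral_biUnion (to_countable I) (fun n _ ↦ hS n) (hdisj.set_pairwise I)]
  exact lintegral_mono_set (iUnion₂_subset hST)

/- Telescoping from a scale outside `N`, where `g n = g₀`, gives
`g₀ = g n + ∑_{k ≤ n} (g (k-1) - g k)`; then the sums over `k ≤ n` are interchanged. -/
lemma tsum_indicator_mul_setLIntegral_le {S T : ℤ → Set X} (hS : ∀ n, MeasurableSet (S n))
    (hdisj : Pairwise (Disjoint on S)) (hST : ∀ ⦃k n⦄, k ≤ n → S n ⊆ T k) (hW : Antitone W)
    {N : Set ℤ} (hN : IsUpperSet N) {k₀ : ℤ} (hk₀ : k₀ ∉ N) {g₀ : X → F}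
    (hg : ∀ n, StronglyMeasurable (g n)) (hgN : ∀ n ∉ N, g n = g₀) :
    ∑' n, N.indicator (fun n ↦ W n * ∫⁻ x in S n, ‖g₀ x‖ₑ ∂ν) n ≤
      ∑' n, N.indicator (fun n ↦ W n * ∫⁻ x in S n, ‖g n x‖ₑ ∂ν +
        W n * ∫⁻ x in T n, ‖g (n - 1) x - g n x‖ₑ ∂ν) n := by
  set D : ℤ → X → ℝ≥0∞ := fun k x ↦ ‖g (k - 1) x - g k x‖ₑ
  have hDN {k : ℤ} (hk : k ∉ N) : D k = 0 := by
    have hk' : k - 1 ∉ N := fun h ↦ hk (hN (by omega) h)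
    ext x; simp [D, hgN k hk, hgN _ hk']
  have hscale {n : ℤ} (hn : n ∈ N) : W n * ∫⁻ x in S n, ‖g₀ x‖ₑ ∂ν ≤
      W n * ∫⁻ x in S n, ‖g n x‖ₑ ∂ν +
        ∑' k, (Ici k).indicator (fun n ↦ W k * ∫⁻ x in S n, D k x ∂ν) n := by
    have hkn : k₀ ≤ n := le_of_not_ge fun h ↦ hk₀ (hN h hn)
    exact hgN k₀ hk₀ ▸ mul_setLIntegral_enorm_le_add_tsum hW hg (S n) hkn
  have hshell (k : ℤ) : ∑' n, (Ici k).indicator (fun n ↦ W k * ∫⁻ x in S n, D k x ∂ν) n ≤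
      N.indicator (fun k ↦ W k * ∫⁻ x in T k, D k x ∂ν) k := by
    by_cases hk : k ∈ N
    · simp only [indicator_of_mem hk, indicator_const_mul, ENNReal.tsum_mul_left]
      gcongr
      exact tsum_indicator_setLIntegral_le hS hdisj (fun n hn ↦ hST hn) (D k)
    · simp [hDN hk]
  calc ∑' n, N.indicator (fun n ↦ W n * ∫⁻ x in S n, ‖g₀ x‖ₑ ∂ν) n
      ≤ ∑' n, (N.indicator (fun n ↦ W n * ∫⁻ x in S n, ‖g n x‖ₑ ∂ν) n +
          ∑' k, (Ici k).indicator (fun n ↦ W k * ∫⁻ x in S n, D k x ∂ν) n) :=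
        ENNReal.tsum_le_tsum fun n ↦ by
          by_cases hn : n ∈ N
          · simpa only [indicator_of_mem hn] using hscale hn
          · simp [hn]
    _ = (∑' n, N.indicator (fun n ↦ W n * ∫⁻ x in S n, ‖g n x‖ₑ ∂ν) n) +
          ∑' k, ∑' n, (Ici k).indicator (fun n ↦ W k * ∫⁻ x in S n, D k x ∂ν) n := by
        rw [ENNReal.tsum_add, ENNReal.tsum_comm]
    _ ≤ (∑' n, N.indicator (fun n ↦ W n * ∫⁻ x in S n, ‖g n x‖ₑ ∂ν) n) +
          ∑' k, N.indicator (fun k ↦ W k * ∫⁻ x in T k, D k x ∂ν) k := by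
        gcongr with k
        exact hshell k
    _ = _ := by
        rw [← ENNReal.tsum_add]
        congr! 2 with n
        by_cases hn : n ∈ N <;> simp [hn, D]

end Telescoping

section DyadicScales

/-- A two-sided sequence of positive scales whose consecutive ratios lie between `2` and `B`. -/
structure IsLacunary (B : ℝ≥0) (α : ℤ → ℝ≥0) : Prop where
  pos (n : ℤ) : 0 < α n
  two_mul_le (n : ℤ) : 2 * α n ≤ α (n + 1)
  le_mul (n : ℤ) : α (n + 1) ≤ B * α n

namespace IsLacunary

variable {B : ℝ≥0} {α : ℤ → ℝ≥0}

lemma monotone (hα : IsLacunary B α) : Monotone α :=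
  monotone_int_of_le_succ fun n ↦
    (le_mul_of_one_le_left zero_le one_le_two).trans (hα.two_mul_le n)

lemma const_pos (hα : IsLacunary B α) : 0 < B :=
  pos_of_mul_pos_left ((hα.pos 1).trans_le (hα.le_mul 0)) zero_le

lemma inv_mul_succ_le (hα : IsLacunary B α) (n : ℤ) : (α n)⁻¹ * α (n + 1) ≤ B :=
  (inv_mul_le_iff₀ (hα.pos n)).mpr ((hα.le_mul n).trans_eq (mul_comm _ _))

lemma two_mul_coe_le (hα : IsLacunary B α) (n : ℤ) : 2 * (α n : ℝ≥0∞) ≤ α (n + 1) := by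
  exact_mod_cast hα.two_mul_le n

lemma two_mul_sq_coe_le (hα : IsLacunary B α) (n : ℤ) :
    2 * (α n : ℝ≥0∞) ^ 2 ≤ (α (n + 1) : ℝ≥0∞) ^ 2 :=
  two_mul_sq_le_sq (b := fun n ↦ (α n : ℝ≥0∞)) hα.two_mul_coe_le n

end IsLacunary

/-- The interval of frequencies dual to the length `α²`. -/
def freqBall (α : ℝ≥0) : Set ℝ := closedBall 0 ((α⁻¹ : ℝ≥0) ^ 2)

/-- The frequencies between the scales `n` and `n + 1`. -/
def freqShell (α : ℤ → ℝ≥0) (n : ℤ) : Set ℝ := freqBall (α n) \ freqBall (α (n + 1))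

lemma measurableSet_freqBall (α : ℝ≥0) : MeasurableSet (freqBall α) := measurableSet_closedBall

lemma measurableSet_freqShell (α : ℤ → ℝ≥0) (n : ℤ) : MeasurableSet (freqShell α n) :=
  (measurableSet_freqBall _).diff (measurableSet_freqBall _)

lemma volume_freqBall (α : ℝ≥0) : volume (freqBall α) = ((2 * α⁻¹ ^ 2 : ℝ≥0) : ℝ≥0∞) := by
  rw [freqBall, Real.volume_closedBall, ← ENNReal.ofReal_coe_nnreal]
  push_cast
  rfl

lemma freqBall_subset {α α' : ℝ≥0} (hα : 0 < α) (h : α ≤ α') : freqBall α' ⊆ freqBall α :=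
  closedBall_subset_closedBall (by gcongr)

lemma IsLacunary.freqShell_subset_freqBall {B : ℝ≥0} {α : ℤ → ℝ≥0} (hα : IsLacunary B α) ⦃k n : ℤ⦄
    (hkn : k ≤ n) : freqShell α n ⊆ freqBall (α k) :=
  sdiff_subset.trans (freqBall_subset (hα.pos k) (hα.monotone hkn))

lemma IsLacunary.pairwise_disjoint_freqShell {B : ℝ≥0} {α : ℤ → ℝ≥0} (hα : IsLacunary B α) :
    Pairwise (Disjoint on freqShell α) := by
  rw [pairwise_disjoint_on]
  exact fun m n hmn ↦ disjoint_left.mpr fun ξ hm hn ↦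
    hm.2 (hα.freqShell_subset_freqBall hmn hn)

lemma one_le_mul_enorm_of_notMem_freqBall {α : ℝ≥0} (hα : 0 < α) {ξ : ℝ} (hξ : ξ ∉ freqBall α) :
    1 ≤ (α : ℝ≥0∞) ^ 2 * ‖ξ‖ₑ := by
  have hξ' : (α ^ 2)⁻¹ ≤ ‖ξ‖₊ := by
    rw [freqBall, mem_closedBall_zero_iff, not_le] at hξ
    rw [← inv_pow]
    exact_mod_cast hξ.le
  have h : 1 ≤ α ^ 2 * ‖ξ‖₊ := (inv_le_iff_one_le_mul₀' (pow_pos hα 2)).mp hξ'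
  rw [enorm_eq_nnnorm]
  exact_mod_cast h

variable {F : Type*} [NormedAddCommGroup F] [InnerProductSpace ℂ F] [CompleteSpace F]

lemma enorm_fourier_le_of_notMem_freqBall {v : ℝ → F} {k : ℕ} (hv : ContDiff ℝ k v)
    (hint : Integrable v) {α : ℝ≥0} (hα : 0 < α) {ξ : ℝ} (hξ : ξ ∉ freqBall α) :
    ‖𝓕 v ξ‖ₑ ≤ ((α : ℝ≥0∞) ^ 2) ^ k * ∫⁻ x, ‖iteratedDeriv k v x‖ₑ :=
  calc ‖𝓕 v ξ‖ₑ ≤ ((α : ℝ≥0∞) ^ 2 * ‖ξ‖ₑ) ^ k * ‖𝓕 v ξ‖ₑ :=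
        le_mul_of_one_le_left zero_le
          (one_le_pow₀ (one_le_mul_enorm_of_notMem_freqBall hα hξ))
    _ = ((α : ℝ≥0∞) ^ 2) ^ k * (‖ξ‖ₑ ^ k * ‖𝓕 v ξ‖ₑ) := by ring
    _ ≤ ((α : ℝ≥0∞) ^ 2) ^ k * ∫⁻ x, ‖iteratedDeriv k v x‖ₑ := by
        gcongr
        exact enorm_pow_mul_enorm_fourier_le hv hint ξ

lemma setLIntegral_freqBall_enorm_fourier_le {v : ℝ → F} (hv : Integrable v) (α : ℝ≥0) :
    ∫⁻ ξ in freqBall α, ‖𝓕 v ξ‖ₑ ≤ ((2 * α⁻¹ : ℝ≥0) : ℝ≥0∞) * eLpNorm v 2 := by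
  have hvol : volume (freqBall α) ^ (1 / 2 : ℝ) ≤ ((2 * α⁻¹ : ℝ≥0) : ℝ≥0∞) := by
    rw [one_div, ENNReal.rpow_inv_le_iff two_pos, volume_freqBall]
    norm_cast
    calc 2 * α⁻¹ ^ 2 ≤ 4 * α⁻¹ ^ 2 := by gcongr; norm_num
      _ = (2 * α⁻¹) ^ 2 := by ring
  rw [mul_comm]
  exact (setLIntegral_enorm_fourier_le hv _).trans (by gcongr)

variable {p q : ℕ} {B : ℝ≥0} {α β : ℤ → ℝ≥0} {l : ℝ≥0∞}

lemma IsLacunary.mul_setLIntegral_freqShell_le (hα : IsLacunary B α) {w : ℝ → F}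
    (hw : IsDerivBounded (p + 1) l w) (n : ℤ) :
    (((α n)⁻¹ ^ (2 * p) : ℝ≥0) : ℝ≥0∞) * ∫⁻ ξ in freqShell α n, ‖𝓕 w ξ‖ₑ ≤
      ((2 * B ^ (2 * (p + 1)) : ℝ≥0) : ℝ≥0∞) * l := by
  have hcoef : (α n)⁻¹ ^ (2 * p) * ((α (n + 1) ^ 2) ^ (p + 1) * (2 * (α n)⁻¹ ^ 2)) ≤
      2 * B ^ (2 * (p + 1)) :=
    calc _ = 2 * ((α n)⁻¹ * α (n + 1)) ^ (2 * (p + 1)) := by ring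
      _ ≤ 2 * B ^ (2 * (p + 1)) := by
        gcongr
        exact (inv_mul_le_iff₀ (hα.pos n)).mpr ((hα.le_mul n).trans_eq (mul_comm _ _))
  calc (((α n)⁻¹ ^ (2 * p) : ℝ≥0) : ℝ≥0∞) * ∫⁻ ξ in freqShell α n, ‖𝓕 w ξ‖ₑ
      ≤ (((α n)⁻¹ ^ (2 * p) : ℝ≥0) : ℝ≥0∞) *
          ∫⁻ _ in freqShell α n, ((α (n + 1) : ℝ≥0∞) ^ 2) ^ (p + 1) * l := by
        refine mul_le_mul_right (setLIntegral_mono' (measurableSet_freqShell α n) fun ξ hξ ↦ ?_) _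
        exact (enorm_fourier_le_of_notMem_freqBall hw.contDiff hw.integrable (hα.pos _) hξ.2).trans
          (by gcongr; exact hw.lintegral_le)
    _ ≤ (((α n)⁻¹ ^ (2 * p) : ℝ≥0) : ℝ≥0∞) *
          (((α (n + 1) : ℝ≥0∞) ^ 2) ^ (p + 1) * l * ((2 * (α n)⁻¹ ^ 2 : ℝ≥0) : ℝ≥0∞)) := by
        rw [setLIntegral_const, ← volume_freqBall]
        gcongr
        exact sdiff_subset
    _ = (((α n)⁻¹ ^ (2 * p) * ((α (n + 1) ^ 2) ^ (p + 1) * (2 * (α n)⁻¹ ^ 2)) : ℝ≥0) : ℝ≥0∞) *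
          l := by push_cast; ring
    _ ≤ ((2 * B ^ (2 * (p + 1)) : ℝ≥0) : ℝ≥0∞) * l := by gcongr

lemma IsDerivBounded.mul_setLIntegral_freqBall_le {D : ℝ → F} (hD : IsDerivBounded (p + 1) l D)
    {ψ : ℝ → ℝ≥0∞} (hψm : Measurable ψ) {A : ℝ≥0∞} {M a : ℝ≥0} (ha : 0 < a)
    (hψ : volume {x | A < ψ x} ≤ (a : ℝ≥0∞) ^ 2) (hDψ : ∀ᵐ x, ‖D x‖ₑ ≤ M * ψ x) :
    ((a⁻¹ ^ (2 * p) : ℝ≥0) : ℝ≥0∞) * ∫⁻ ξ in freqBall a, ‖𝓕 D ξ‖ₑ ≤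
      ((2 ^ (p + 1) * a⁻¹ ^ (2 * p + 1) * M : ℝ≥0) : ℝ≥0∞) *
          eLpNorm (fun x ↦ min (ψ x) A) 2 +
        ((2 * (p + 1) ^ p : ℝ≥0) : ℝ≥0∞) * l := by
  have hcoef : a⁻¹ ^ (2 * p) * (2 * a⁻¹ * (((p + 1) * a ^ 2) ^ p * a)) = 2 * (p + 1) ^ p := by
    calc _ = 2 * (p + 1) ^ p * (a⁻¹ * a) ^ (2 * p + 1) := by rw [mul_pow]; ring
      _ = 2 * (p + 1) ^ p := by rw [inv_mul_cancel₀ ha.ne', one_pow, mul_one]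
  calc ((a⁻¹ ^ (2 * p) : ℝ≥0) : ℝ≥0∞) * ∫⁻ ξ in freqBall a, ‖𝓕 D ξ‖ₑ
      ≤ ((a⁻¹ ^ (2 * p) : ℝ≥0) : ℝ≥0∞) * (((2 * a⁻¹ : ℝ≥0) : ℝ≥0∞) *
          (2 ^ p * M * eLpNorm (fun x ↦ min (ψ x) A) 2 +
            ((p + 1) * (a : ℝ≥0∞) ^ 2) ^ p * l * a)) := by
        gcongr
        refine (setLIntegral_freqBall_enorm_fourier_le hD.integrable a).trans ?_
        gcongr
        exact hD.eLpNorm_two_le hψm ha hψ hDψ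
    _ = _ := by
        rw [← hcoef]
        push_cast
        ring

end DyadicScales

section LineDerivatives

variable {E F : Type*} [NormedAddCommGroup E] [NormedSpace ℝ E] [NormedAddCommGroup F]
  [NormedSpace ℝ F]

lemma iteratedDeriv_comp_add_smul {f : E → F} {k : ℕ} (hf : ContDiff ℝ k f) (c e : E) (t : ℝ) :
    iteratedDeriv k (fun s ↦ f (c + s • e)) t = iteratedFDeriv ℝ k f (c + t • e) fun _ ↦ e := by
  have hcomp : (fun s : ℝ ↦ f (c + s • e)) =
      (fun x ↦ f (c + x)) ∘ (ContinuousLinearMap.id ℝ ℝ).smulRight e := by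
    ext s; simp
  have hf' : ContDiff ℝ k fun x ↦ f (c + x) := by fun_prop
  rw [iteratedDeriv_eq_iteratedFDeriv, hcomp,
    ContinuousLinearMap.iteratedFDeriv_comp_right _ hf' _ le_rfl, iteratedFDeriv_comp_add_left]
  simp [ContinuousMultilinearMap.compContinuousLinearMap_apply]

/-- The `L¹` norm in the first variable of the `k`-th derivative of `u` in that variable. -/
noncomputable def derivNormFst (k : ℕ) (u : ℝ × ℝ → F) (y : ℝ) : ℝ≥0∞ :=
  ∫⁻ x, ‖iteratedDeriv k (fun x ↦ u (x, y)) x‖ₑ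

lemma continuous_iteratedDeriv_fst {k : ℕ} {u : ℝ × ℝ → F} (hu : ContDiff ℝ k u) :
    Continuous fun z : ℝ × ℝ ↦ iteratedDeriv k (fun x ↦ u (x, z.2)) z.1 := by
  have hline (z : ℝ × ℝ) : iteratedDeriv k (fun x ↦ u (x, z.2)) z.1 =
      iteratedFDeriv ℝ k u z fun _ ↦ (1, 0) := by
    simpa using iteratedDeriv_comp_add_smul hu (0, z.2) (1, 0) z.1
  simp_rw [hline]
  exact (hu.continuous_iteratedFDeriv le_rfl).eval_const _

lemma measurable_derivNormFst {k : ℕ} {u : ℝ × ℝ → F} (hu : ContDiff ℝ k u) :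
    Measurable (derivNormFst k u) :=
  (continuous_iteratedDeriv_fst hu).enorm.measurable.lintegral_prod_left'

end LineDerivatives

section Approximation

variable {F : Type*} [NormedAddCommGroup F] [NormedSpace ℝ F] [CompleteSpace F] {p q : ℕ}
  {u : ℝ × ℝ → F}

/- Replace a bad slice by its extrapolation from good ones. -/
lemma exists_isDerivBounded_enorm_sub_le (hp : ContDiff ℝ (p + 1 : ℕ) u)
    (hq : ContDiff ℝ (q + 1 : ℕ) u) (hint : Integrable u) {y : ℝ}
    (hy : Integrable fun x ↦ u (x, y)) {b : ℝ≥0} (hb : 0 < b) {l : ℝ≥0∞}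
    (hl : volume {y | l < derivNormFst (p + 1) u y} ≤ (b : ℝ≥0∞) ^ 2) :
    ∃ w : ℝ → F, IsDerivBounded (p + 1) (2 ^ q * l) w ∧
      (∀ᵐ x, ‖u (x, y) - w x‖ₑ ≤
        ((q + 1) * (b : ℝ≥0∞) ^ 2) ^ q * derivNormFst (q + 1) (u ∘ Prod.swap) x) ∧
      (derivNormFst (p + 1) u y ≤ l → w = fun x ↦ u (x, y)) := by
  have hslice (y : ℝ) : ContDiff ℝ (p + 1 : ℕ) fun x ↦ u (x, y) := by fun_prop
  rcases le_or_gt (derivNormFst (p + 1) u y) l with hly | hly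
  · refine ⟨fun x ↦ u (x, y), ⟨hslice y, hy, hly.trans ?_⟩, ?_, fun _ ↦ rfl⟩
    · exact le_mul_of_one_le_left zero_le (one_le_pow₀ one_le_two)
    · simp
  · have hgood : ∀ᵐ y, Integrable fun x ↦ u (x, y) := hint.prod_left_ae
    have hbad : volume ({y | l < derivNormFst (p + 1) u y} ∪
        {y | ¬ Integrable fun x ↦ u (x, y)}) ≤ ((b ^ 2 : ℝ≥0) : ℝ≥0∞) :=
      (measure_union_le _ _).trans (by rwa [ae_iff.mp hgood, add_zero, ENNReal.coe_pow])
    obtain ⟨t, ht, hnot⟩ := exists_enorm_le_forall_add_nsmul_notMem (pow_pos hb 2) hbad q y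
    rw [ENNReal.coe_pow] at ht
    refine ⟨polyExtrapolate q t (fun y x ↦ u (x, y)) y, .extrapolate fun i hi ↦ ?_, ?_,
      fun h ↦ absurd h hly.not_ge⟩
    · obtain ⟨hvar, hi⟩ := not_or.mp (hnot i hi)
      exact ⟨hslice _, not_not.mp hi, not_lt.mp hvar⟩
    · filter_upwards [hint.prod_right_ae] with x hx
      have hq' : ContDiff ℝ (q + 1 : ℕ) fun y ↦ u (x, y) := by fun_prop
      have happly : polyExtrapolate q t (fun y x ↦ u (x, y)) y x =
          polyExtrapolate q t (fun y ↦ u (x, y)) y := by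
        simp only [polyExtrapolate, Finset.sum_apply, Pi.smul_apply]
      rw [happly]
      exact (enorm_sub_polyExtrapolate q t (fun y ↦ u (x, y)) y).trans_le
        ((enorm_iter_fwdDiff_le q t hq' hx y).trans (by gcongr; exact le_rfl))

end Approximation

section LowFrequencies

variable {F : Type*} [NormedAddCommGroup F] [InnerProductSpace ℂ F] [CompleteSpace F] {p q : ℕ}
  {B : ℝ≥0} {α β : ℤ → ℝ≥0} {φ ψ : ℝ → ℝ≥0∞}

/-- The constant in the estimate of a single scale by `scaleBound`. -/
def scaleConst (p q : ℕ) (B : ℝ≥0) : ℝ≥0 :=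
  2 * B ^ (2 * (p + 1)) * 2 ^ q + 2 ^ (p + 2) * (q + 1) ^ q + 2 * (p + 1) ^ p * 2 ^ (q + 1)

/-- The contribution of the scale `n` to the estimate, in terms of the rearrangements of the `L¹`
norms `φ` and `ψ` of the derivatives in the two variables. -/
noncomputable def scaleBound (α β : ℤ → ℝ≥0) (φ ψ : ℝ → ℝ≥0∞) (n : ℤ) : ℝ≥0∞ :=
  decrRearr volume φ ((β (n - 1) : ℝ≥0∞) ^ 2) + ((α n / β n ^ 2 : ℝ≥0) : ℝ≥0∞) *
    eLpNorm (fun x ↦ min (ψ x) (decrRearr volume ψ ((α n : ℝ≥0∞) ^ 2))) 2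

lemma tsum_mul_scaleBound_le (hα : IsLacunary B α) (hβ : IsLacunary B β) (hφ : Measurable φ)
    (hψ : Measurable ψ) :
    ∑' n, (β n : ℝ≥0∞) ^ 2 * scaleBound α β φ ψ n ≤
      (2 * B ^ 2 + 4 * B : ℝ≥0) * ((∫⁻ y, φ y) + ∫⁻ x, ψ x) := by
  set a : ℤ → ℝ≥0∞ := fun n ↦
    (α n : ℝ≥0∞) * eLpNorm (fun x ↦ min (ψ x) (decrRearr volume ψ ((α n : ℝ≥0∞) ^ 2))) 2
  set b : ℤ → ℝ≥0∞ := fun n ↦ (β n : ℝ≥0∞) ^ 2 * decrRearr volume φ ((β n : ℝ≥0∞) ^ 2)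
  have ha : ∑' n, a n ≤ 4 * B * ∫⁻ x, ψ x :=
    tsum_mul_eLpNorm_min_decrRearr_le hψ hα.two_mul_coe_le
      (fun n ↦ ENNReal.coe_ne_zero.mpr (hα.pos n).ne') (ENNReal.coe_ne_zero.mpr hα.const_pos.ne')
      fun n ↦ by exact_mod_cast hα.le_mul n
  have hb : ∑' n, b (n - 1) ≤ 2 * ∫⁻ y, φ y :=
    ((Equiv.subRight (1 : ℤ)).tsum_eq b).trans_le
      (tsum_mul_decrRearr_le hφ hβ.two_mul_sq_coe_le)
  have hterm (n : ℤ) :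
      (β n : ℝ≥0∞) ^ 2 * scaleBound α β φ ψ n ≤ (B : ℝ≥0∞) ^ 2 * b (n - 1) + a n := by
    have hβn : (β n : ℝ≥0∞) ^ 2 ≤ (B : ℝ≥0∞) ^ 2 * (β (n - 1) : ℝ≥0∞) ^ 2 := by
      rw [← mul_pow]
      gcongr
      exact_mod_cast sub_add_cancel n 1 ▸ hβ.le_mul (n - 1)
    have hcancel : (β n : ℝ≥0∞) ^ 2 * ((α n / β n ^ 2 : ℝ≥0) : ℝ≥0∞) = α n := by
      exact_mod_cast mul_div_cancel₀ (α n) (pow_pos (hβ.pos n) 2).ne'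
    rw [scaleBound, mul_add, ← mul_assoc _ (_ : ℝ≥0∞) (eLpNorm _ _ _), hcancel, ← mul_assoc]
    gcongr
  calc ∑' n, (β n : ℝ≥0∞) ^ 2 * scaleBound α β φ ψ n
      ≤ (B : ℝ≥0∞) ^ 2 * ∑' n, b (n - 1) + ∑' n, a n := by
        rw [← ENNReal.tsum_mul_left, ← ENNReal.tsum_add]
        exact ENNReal.tsum_le_tsum hterm
    _ ≤ (B : ℝ≥0∞) ^ 2 * (2 * ∫⁻ y, φ y) + 4 * B * ∫⁻ x, ψ x := by gcongr
    _ = (2 * B ^ 2 : ℝ≥0) * (∫⁻ y, φ y) + (4 * B : ℝ≥0) * ∫⁻ x, ψ x := by push_cast; ring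
    _ ≤ (2 * B ^ 2 + 4 * B : ℝ≥0) * ((∫⁻ y, φ y) + ∫⁻ x, ψ x) := by
        rw [mul_add]
        gcongr
        · exact le_self_add
        · exact le_add_self

lemma inv_pow_mul_sq_pow_eq_div {x y : ℝ≥0} (hx : 0 < x) (hy : 0 < y)
    (hxy : x ^ (p + 1) = y ^ (q + 1)) : x⁻¹ ^ (2 * p + 1) * (y ^ 2) ^ q = x / y ^ 2 := by
  have hsq : (y ^ 2) ^ q * y ^ 2 = (x ^ 2) ^ (p + 1) := by
    rw [← pow_succ, pow_right_comm, ← hxy, pow_right_comm]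
  have hxp : x⁻¹ ^ (2 * p + 1) * (x ^ 2) ^ (p + 1) = x := by
    rw [← pow_mul, mul_add_one 2 p, pow_succ x (2 * p + 1), ← mul_assoc, ← mul_pow,
      inv_mul_cancel₀ hx.ne', one_pow, one_mul]
  rw [eq_div_iff (pow_pos hy 2).ne', mul_assoc, hsq, hxp]

lemma mul_setLIntegral_add_le_scaleConst_mul (hα : IsLacunary B α) {n : ℤ} (hβ : 0 < β n)
    (hαβ : α n ^ (p + 1) = β n ^ (q + 1)) (hψm : Measurable ψ) {A l l' : ℝ≥0∞}
    (hψ : volume {x | A < ψ x} ≤ (α n : ℝ≥0∞) ^ 2) (hl : l ≤ l') {v w w' : ℝ → F}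
    (hw : IsDerivBounded (p + 1) (2 ^ q * l) w) (hw' : IsDerivBounded (p + 1) (2 ^ q * l') w')
    (hvw : ∀ᵐ x, ‖v x - w x‖ₑ ≤ ((q + 1) * (β n : ℝ≥0∞) ^ 2) ^ q * ψ x)
    (hvw' : ∀ᵐ x, ‖v x - w' x‖ₑ ≤ ((q + 1) * (β n : ℝ≥0∞) ^ 2) ^ q * ψ x) :
    (((α n)⁻¹ ^ (2 * p) : ℝ≥0) : ℝ≥0∞) * (∫⁻ ξ in freqShell α n, ‖𝓕 w ξ‖ₑ) +
        (((α n)⁻¹ ^ (2 * p) : ℝ≥0) : ℝ≥0∞) * (∫⁻ ξ in freqBall (α n), ‖𝓕 w' ξ - 𝓕 w ξ‖ₑ) ≤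
      scaleConst p q B *
        (l' + ((α n / β n ^ 2 : ℝ≥0) : ℝ≥0∞) * eLpNorm (fun x ↦ min (ψ x) A) 2) := by
  set N := eLpNorm (fun x ↦ min (ψ x) A) 2
  set M : ℝ≥0 := 2 * ((q + 1) * β n ^ 2) ^ q
  have hdiff : ∀ᵐ x, ‖(w' - w) x‖ₑ ≤ M * ψ x := by
    filter_upwards [hvw, hvw'] with x hx hx'
    calc ‖(w' - w) x‖ₑ = ‖(v x - w x) - (v x - w' x)‖ₑ := by rw [sub_sub_sub_cancel_left]; rfl
      _ ≤ _ := enorm_sub_le.trans (add_le_add hx hx')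
      _ = M * ψ x := by push_cast [M]; ring
  have hcoef : 2 ^ (p + 1) * (α n)⁻¹ ^ (2 * p + 1) * M =
      2 ^ (p + 2) * (q + 1) ^ q * (α n / β n ^ 2) :=
    calc _ = 2 ^ (p + 2) * (q + 1) ^ q * ((α n)⁻¹ ^ (2 * p + 1) * (β n ^ 2) ^ q) := by
          simp only [M, mul_pow _ (β n ^ 2)]; ring
      _ = _ := by rw [inv_pow_mul_sq_pow_eq_div (hα.pos n) hβ hαβ]
  have hl'le : 2 * B ^ (2 * (p + 1)) * 2 ^ q + 2 * (p + 1) ^ p * 2 ^ (q + 1) ≤ scaleConst p q B :=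
    add_le_add le_self_add le_rfl
  have hNle : 2 ^ (p + 2) * (q + 1) ^ q ≤ scaleConst p q B := le_add_self.trans le_self_add
  have hhigh := hα.mul_setLIntegral_freqShell_le hw n
  have hlow := (hw'.sub hw).mul_setLIntegral_freqBall_le hψm (hα.pos n) hψ hdiff
  rw [hcoef] at hlow
  simp_rw [fourier_sub_of_integrable hw'.integrable hw.integrable, Pi.sub_apply] at hlow
  calc _ ≤ _ := add_le_add hhigh hlow
    _ ≤ (2 * B ^ (2 * (p + 1)) : ℝ≥0) * (2 ^ q * l') +
          ((2 ^ (p + 2) * (q + 1) ^ q * (α n / β n ^ 2) : ℝ≥0) * N +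
            (2 * (p + 1) ^ p : ℝ≥0) * (2 ^ q * l' + 2 ^ q * l')) := by gcongr
    _ = ((2 * B ^ (2 * (p + 1)) * 2 ^ q : ℝ≥0) + (2 * (p + 1) ^ p * 2 ^ (q + 1) : ℝ≥0)) * l' +
          (2 ^ (p + 2) * (q + 1) ^ q : ℝ≥0) * ((α n / β n ^ 2 : ℝ≥0) * N) := by
        push_cast; ring
    _ ≤ scaleConst p q B * (l' + (α n / β n ^ 2 : ℝ≥0) * N) := by
        rw [mul_add (_ : ℝ≥0∞), ← ENNReal.coe_add]
        exact add_le_add (mul_le_mul_left (ENNReal.coe_le_coe.mpr hl'le) _)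
          (mul_le_mul_left (ENNReal.coe_le_coe.mpr hNle) _)

end LowFrequencies

section TwoVariables

variable {F : Type*} [NormedAddCommGroup F] [InnerProductSpace ℂ F]

/-- The Fourier transform of `u` in its first variable. -/
noncomputable def fourierFst (u : ℝ × ℝ → F) (z : ℝ × ℝ) : F := 𝓕 (fun x ↦ u (x, z.2)) z.1

lemma stronglyMeasurable_fourierFst {u : ℝ × ℝ → F} (hu : StronglyMeasurable u) :
    StronglyMeasurable (fourierFst u) :=
  (stronglyMeasurable_fourier (u := fun y x ↦ u (x, y))
    (hu.comp_measurable measurable_swap)).comp_measurable measurable_swap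

lemma integrable_fourierFst {u : ℝ × ℝ → F} (hu : StronglyMeasurable u) (hint : Integrable u)
    (ξ : ℝ) : Integrable fun y ↦ fourierFst u (ξ, y) := by
  refine ⟨((stronglyMeasurable_fourierFst hu).comp_measurable
    measurable_prodMk_left).aestronglyMeasurable, ?_⟩
  calc ∫⁻ y, ‖fourierFst u (ξ, y)‖ₑ ≤ ∫⁻ y, ∫⁻ x, ‖u (x, y)‖ₑ :=
        lintegral_mono fun y ↦ enorm_fourier_le _ ξ
    _ = ∫⁻ z, ‖u z‖ₑ := (lintegral_prod_symm _ hu.enorm.aemeasurable).symm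
    _ < ⊤ := hint.2

/-- The points at which `φ` exceeds its decreasing rearrangement at `(β n)²`. -/
def badSet (β : ℤ → ℝ≥0) (φ : ℝ → ℝ≥0∞) (n : ℤ) : Set ℝ :=
  {y | decrRearr volume φ ((β n : ℝ≥0∞) ^ 2) < φ y}

lemma measurableSet_badSet {β : ℤ → ℝ≥0} {φ : ℝ → ℝ≥0∞} (hφ : Measurable φ) (n : ℤ) :
    MeasurableSet (badSet β φ n) :=
  measurableSet_lt measurable_const hφ

lemma volume_badSet_le {β : ℤ → ℝ≥0} {φ : ℝ → ℝ≥0∞} (n : ℤ) :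
    volume (badSet β φ n) ≤ (β n : ℝ≥0∞) ^ 2 :=
  measure_decrRearr_lt_le _

variable {p q : ℕ} {B : ℝ≥0} {α β : ℤ → ℝ≥0}

lemma IsLacunary.ae_exists_notMem_badSet (hβ : IsLacunary B β) (φ : ℝ → ℝ≥0∞) :
    ∀ᵐ y, ∃ k, y ∉ badSet β φ k := by
  have hdecay (j : ℕ) : β (-j) ≤ β 0 * 2⁻¹ ^ j := by
    induction j with
    | zero => simp
    | succ j ih =>
      have h := hβ.two_mul_le (-(j + 1 : ℕ))
      rw [show -((j + 1 : ℕ) : ℤ) + 1 = -j by push_cast; ring] at h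
      rw [pow_succ, ← mul_assoc, le_mul_inv_iff₀ two_pos, mul_comm]
      exact h.trans ih
  have hlim : Filter.Tendsto (fun j : ℕ ↦ ((β 0 * 2⁻¹ ^ j : ℝ≥0) : ℝ≥0∞) ^ 2) Filter.atTop
      (nhds 0) := by
    have h : Filter.Tendsto (fun j : ℕ ↦ (β 0 * 2⁻¹ ^ j) ^ 2) Filter.atTop (nhds (0 : ℝ≥0)) := by
      simpa using ((NNReal.tendsto_pow_atTop_nhds_zero_of_lt_one (r := 2⁻¹)
        (inv_lt_one_of_one_lt₀ one_lt_two)).const_mul (β 0)).pow 2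
    simpa only [ENNReal.coe_pow, ENNReal.coe_zero] using ENNReal.tendsto_coe.mpr h
  have hzero : volume (⋂ n, badSet β φ n) = 0 := by
    refine le_antisymm (ge_of_tendsto' hlim fun j ↦ ?_) zero_le
    exact (measure_mono (iInter_subset _ (-(j : ℤ)))).trans
      ((volume_badSet_le _).trans (by gcongr; exact hdecay j))
  filter_upwards [measure_eq_zero_iff_ae_notMem.mp hzero] with y hy
  simpa only [mem_iInter, not_forall] using hy

variable [CompleteSpace F] {u : ℝ × ℝ → F}

lemma tsum_indicator_badSet_le (hα : IsLacunary B α) (hβ : IsLacunary B β)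
    (hαβ : ∀ n, α n ^ (p + 1) = β n ^ (q + 1)) (hp : ContDiff ℝ (p + 1 : ℕ) u)
    (hq : ContDiff ℝ (q + 1 : ℕ) u) (hint : Integrable u) {y : ℝ}
    (hy : Integrable fun x ↦ u (x, y)) {k₀ : ℤ}
    (hk₀ : y ∉ badSet β (derivNormFst (p + 1) u) k₀) :
    ∑' n, (badSet β (derivNormFst (p + 1) u) n).indicator (fun y ↦
        (((α n)⁻¹ ^ (2 * p) : ℝ≥0) : ℝ≥0∞) * ∫⁻ ξ in freqShell α n, ‖fourierFst u (ξ, y)‖ₑ) y ≤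
      scaleConst p q B * ∑' n, (badSet β (derivNormFst (p + 1) u) n).indicator (fun _ ↦
        scaleBound α β (derivNormFst (p + 1) u) (derivNormFst (q + 1) (u ∘ Prod.swap)) n) y := by
  set φ := derivNormFst (p + 1) u
  set ψ := derivNormFst (q + 1) (u ∘ Prod.swap)
  set l : ℤ → ℝ≥0∞ := fun n ↦ decrRearr volume φ ((β n : ℝ≥0∞) ^ 2)
  have hψ : Measurable ψ := measurable_derivNormFst (hq.comp (contDiff_snd.prodMk contDiff_fst))
  have hl : Antitone l := fun m n hmn ↦ antitone_decrRearr (by gcongr; exact hβ.monotone hmn)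
  choose w hw hdist heq using fun n ↦ exists_isDerivBounded_enorm_sub_le hp hq hint hy (hβ.pos n)
    (measure_decrRearr_lt_le ((β n : ℝ≥0∞) ^ 2))
  have hdist' (n : ℤ) : ∀ᵐ x, ‖u (x, y) - w (n - 1) x‖ₑ ≤
      ((q + 1) * (β n : ℝ≥0∞) ^ 2) ^ q * ψ x := by
    filter_upwards [hdist (n - 1)] with x hx
    exact hx.trans (by gcongr; exact hβ.monotone (by omega))
  have hW : Antitone fun n ↦ (((α n)⁻¹ ^ (2 * p) : ℝ≥0) : ℝ≥0∞) := fun m n hmn ↦ by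
    have := hα.pos m
    have := hα.monotone hmn
    exact ENNReal.coe_le_coe.mpr (by gcongr)
  calc _ ≤ ∑' n, {n | y ∈ badSet β φ n}.indicator (fun n ↦
        (((α n)⁻¹ ^ (2 * p) : ℝ≥0) : ℝ≥0∞) * (∫⁻ ξ in freqShell α n, ‖𝓕 (w n) ξ‖ₑ) +
        (((α n)⁻¹ ^ (2 * p) : ℝ≥0) : ℝ≥0∞) *
          ∫⁻ ξ in freqBall (α n), ‖𝓕 (w (n - 1)) ξ - 𝓕 (w n) ξ‖ₑ) n :=
        tsum_indicator_mul_setLIntegral_le (measurableSet_freqShell α)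
          hα.pairwise_disjoint_freqShell hα.freqShell_subset_freqBall hW
          (fun m n hmn hm ↦ (hl hmn).trans_lt hm) hk₀
          (fun n ↦ (continuous_fourier_of_integrable (hw n).integrable).stronglyMeasurable)
          fun n hn ↦ by rw [heq n (not_lt.mp hn)]; rfl
    _ ≤ ∑' n, scaleConst p q B * (badSet β φ n).indicator (fun _ ↦ scaleBound α β φ ψ n) y := by
        refine ENNReal.tsum_le_tsum fun n ↦ ?_
        by_cases hn : y ∈ badSet β φ n
        · rw [indicator_of_mem hn, indicator_of_mem (show n ∈ {n | y ∈ badSet β φ n} from hn)]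
          exact mul_setLIntegral_add_le_scaleConst_mul hα (hβ.pos n) (hαβ n) hψ
            (measure_decrRearr_lt_le _) (hl (by omega)) (hw n) (hw (n - 1)) (hdist n) (hdist' n)
        · rw [indicator_of_notMem (show n ∉ {n | y ∈ badSet β φ n} from hn)]
          exact zero_le
    _ = _ := ENNReal.tsum_mul_left

lemma tsum_mul_setLIntegral_badSet_le (hα : IsLacunary B α) (hβ : IsLacunary B β)
    (hαβ : ∀ n, α n ^ (p + 1) = β n ^ (q + 1)) (hp : ContDiff ℝ (p + 1 : ℕ) u)
    (hq : ContDiff ℝ (q + 1 : ℕ) u) (hint : Integrable u) :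
    ∑' n, (((α n)⁻¹ ^ (2 * p) : ℝ≥0) : ℝ≥0∞) * (∫⁻ ξ in freqShell α n,
        ∫⁻ y in badSet β (derivNormFst (p + 1) u) n, ‖fourierFst u (ξ, y)‖ₑ) ≤
      (scaleConst p q B * (2 * B ^ 2 + 4 * B) : ℝ≥0) *
        ((∫⁻ y, derivNormFst (p + 1) u y) + ∫⁻ x, derivNormFst (q + 1) (u ∘ Prod.swap) x) := by
  set φ := derivNormFst (p + 1) u
  set ψ := derivNormFst (q + 1) (u ∘ Prod.swap)
  have hφ : Measurable φ := measurable_derivNormFst hp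
  have hψ : Measurable ψ := measurable_derivNormFst (hq.comp (contDiff_snd.prodMk contDiff_fst))
  have hmeas : Measurable fun z : ℝ × ℝ ↦ ‖fourierFst u z‖ₑ :=
    (stronglyMeasurable_fourierFst hp.continuous.stronglyMeasurable).enorm
  have hbad := measurableSet_badSet (β := β) hφ
  set G : ℤ → ℝ → ℝ≥0∞ := fun n y ↦
    (((α n)⁻¹ ^ (2 * p) : ℝ≥0) : ℝ≥0∞) * ∫⁻ ξ in freqShell α n, ‖fourierFst u (ξ, y)‖ₑ
  have hG (n : ℤ) : Measurable (G n) := hmeas.lintegral_prod_left'.const_mul _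
  have hswap (n : ℤ) : (((α n)⁻¹ ^ (2 * p) : ℝ≥0) : ℝ≥0∞) * (∫⁻ ξ in freqShell α n,
      ∫⁻ y in badSet β φ n, ‖fourierFst u (ξ, y)‖ₑ) = ∫⁻ y, (badSet β φ n).indicator (G n) y := by
    rw [lintegral_lintegral_swap hmeas.aemeasurable, lintegral_indicator (hbad n),
      lintegral_const_mul _ hmeas.lintegral_prod_left']
  simp_rw [hswap]
  calc ∑' n, ∫⁻ y, (badSet β φ n).indicator (G n) y
      = ∫⁻ y, ∑' n, (badSet β φ n).indicator (G n) y :=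
        (lintegral_tsum fun n ↦ ((hG n).indicator (hbad n)).aemeasurable).symm
    _ ≤ ∫⁻ y, scaleConst p q B *
          ∑' n, (badSet β φ n).indicator (fun _ ↦ scaleBound α β φ ψ n) y := by
        refine lintegral_mono_ae ?_
        filter_upwards [hint.prod_left_ae, hβ.ae_exists_notMem_badSet φ] with y hy ⟨k, hk⟩
        exact tsum_indicator_badSet_le hα hβ hαβ hp hq hint hy hk
    _ = scaleConst p q B * ∑' n, scaleBound α β φ ψ n * volume (badSet β φ n) := by
        have hind (n : ℤ) : Measurable ((badSet β φ n).indicator fun _ ↦ scaleBound α β φ ψ n) :=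
          measurable_const.indicator (hbad n)
        rw [lintegral_const_mul _ (.tsum hind), lintegral_tsum fun n ↦ (hind n).aemeasurable]
        simp_rw [lintegral_indicator_const (hbad _)]
    _ ≤ scaleConst p q B * ∑' n, (β n : ℝ≥0∞) ^ 2 * scaleBound α β φ ψ n := by
        refine mul_le_mul_right (ENNReal.tsum_le_tsum fun n ↦ ?_) _
        exact (mul_comm _ _).trans_le (mul_le_mul_left (volume_badSet_le n) _)
    _ ≤ scaleConst p q B *
          ((2 * B ^ 2 + 4 * B : ℝ≥0) * ((∫⁻ y, φ y) + ∫⁻ x, ψ x)) := by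
        gcongr
        exact tsum_mul_scaleBound_le hα hβ hφ hψ
    _ = _ := by rw [ENNReal.coe_mul, mul_assoc]

lemma setLIntegral_freqBall_enorm_fourier_le_add {g : ℝ → F} (hg : Integrable g) {U : Set ℝ}
    (hU : MeasurableSet U) (b : ℝ≥0) :
    ∫⁻ η in freqBall b, ‖𝓕 g η‖ₑ ≤ ((2 * b⁻¹ : ℝ≥0) : ℝ≥0∞) * eLpNorm (Uᶜ.indicator g) 2 +
      ((2 * b⁻¹ ^ 2 : ℝ≥0) : ℝ≥0∞) * ∫⁻ y in U, ‖g y‖ₑ := by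
  have hgU : Integrable (Uᶜ.indicator g) := hg.indicator hU.compl
  have hsplit (η : ℝ) : ‖𝓕 g η‖ₑ ≤ ‖𝓕 (Uᶜ.indicator g) η‖ₑ + ∫⁻ y in U, ‖g y‖ₑ :=
    calc ‖𝓕 g η‖ₑ = ‖𝓕 (Uᶜ.indicator g) η + 𝓕 (g - Uᶜ.indicator g) η‖ₑ := by
          rw [fourier_sub_of_integrable hg hgU, Pi.sub_apply, add_sub_cancel]
      _ ≤ ‖𝓕 (Uᶜ.indicator g) η‖ₑ + ∫⁻ y, ‖(g - Uᶜ.indicator g) y‖ₑ :=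
          (enorm_add_le _ _).trans (add_le_add le_rfl (enorm_fourier_le _ η))
      _ = ‖𝓕 (Uᶜ.indicator g) η‖ₑ + ∫⁻ y in U, ‖g y‖ₑ := by
          rw [← indicator_compl, compl_compl, ← lintegral_indicator hU]
          simp_rw [enorm_indicator_eq_indicator_enorm]
  calc ∫⁻ η in freqBall b, ‖𝓕 g η‖ₑ
      ≤ ∫⁻ η in freqBall b, (‖𝓕 (Uᶜ.indicator g) η‖ₑ + ∫⁻ y in U, ‖g y‖ₑ) :=
        lintegral_mono hsplit
    _ = (∫⁻ η in freqBall b, ‖𝓕 (Uᶜ.indicator g) η‖ₑ) +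
          ((2 * b⁻¹ ^ 2 : ℝ≥0) : ℝ≥0∞) * ∫⁻ y in U, ‖g y‖ₑ := by
        rw [lintegral_add_right _ measurable_const, setLIntegral_const, volume_freqBall, mul_comm]
    _ ≤ _ := by
        gcongr
        exact setLIntegral_freqBall_enorm_fourier_le hgU b

lemma eLpNorm_indicator_fourierFst_le (hp : ContDiff ℝ (p + 1 : ℕ) u) (hint : Integrable u)
    {a : ℝ≥0} (ha : 0 < a) {ξ : ℝ} (hξ : ξ ∉ freqBall a) (l : ℝ≥0∞) :
    eLpNorm ({y | l < derivNormFst (p + 1) u y}ᶜ.indicator fun y ↦ fourierFst u (ξ, y)) 2 ≤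
      ((a : ℝ≥0∞) ^ 2) ^ (p + 1) * eLpNorm (fun y ↦ min (derivNormFst (p + 1) u y) l) 2 := by
  rw [← eLpNorm_two_const_mul ((measurable_derivNormFst hp).min measurable_const)]
  refine eLpNorm_mono_enorm_ae ?_
  filter_upwards [hint.prod_left_ae] with y hy
  rw [enorm_indicator_eq_indicator_enorm, enorm_eq_self]
  by_cases hyl : l < derivNormFst (p + 1) u y
  · rw [indicator_of_notMem (not_not.mpr hyl)]
    exact zero_le
  · rw [indicator_of_mem (show y ∈ {y | l < derivNormFst (p + 1) u y}ᶜ from hyl),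
      min_eq_left (not_lt.mp hyl)]
    exact enorm_fourier_le_of_notMem_freqBall (by fun_prop) hy ha hξ

lemma setLIntegral_freqBall_enorm_fourier_fourierFst_le (hp : ContDiff ℝ (p + 1 : ℕ) u)
    (hint : Integrable u) {a : ℝ≥0} (ha : 0 < a) {ξ : ℝ} (hξ : ξ ∉ freqBall a) (b : ℝ≥0)
    (l : ℝ≥0∞) :
    ∫⁻ η in freqBall b, ‖𝓕 (fun y ↦ fourierFst u (ξ, y)) η‖ₑ ≤
      (2 * b⁻¹ * (a ^ 2) ^ (p + 1) : ℝ≥0) *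
          eLpNorm (fun y ↦ min (derivNormFst (p + 1) u y) l) 2 +
        (2 * b⁻¹ ^ 2 : ℝ≥0) * ∫⁻ y in {y | l < derivNormFst (p + 1) u y}, ‖fourierFst u (ξ, y)‖ₑ :=
  (setLIntegral_freqBall_enorm_fourier_le_add
    (integrable_fourierFst hp.continuous.stronglyMeasurable hint ξ)
    (measurableSet_lt measurable_const (measurable_derivNormFst hp)) b).trans <| add_le_add
    ((mul_le_mul_right (eLpNorm_indicator_fourierFst_le hp hint ha hξ l) _).trans_eq
      (by push_cast; ring)) le_rfl

lemma mul_setLIntegral_freqShell_freqBall_le (hα : IsLacunary B α) (hβ : IsLacunary B β)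
    (hp : ContDiff ℝ (p + 1 : ℕ) u) (hint : Integrable u) (n : ℤ) :
    ((β n ^ 2 * (α n)⁻¹ ^ (2 * p) : ℝ≥0) : ℝ≥0∞) * (∫⁻ ξ in freqShell α n,
        ∫⁻ η in freqBall (β n), ‖𝓕 (fun y ↦ fourierFst u (ξ, y)) η‖ₑ) ≤
      (4 * B ^ (2 * (p + 1)) : ℝ≥0) * (β n * eLpNorm (fun y ↦ min (derivNormFst (p + 1) u y)
        (decrRearr volume (derivNormFst (p + 1) u) ((β n : ℝ≥0∞) ^ 2))) 2) +
      2 * ((((α n)⁻¹ ^ (2 * p) : ℝ≥0) : ℝ≥0∞) * ∫⁻ ξ in freqShell α n,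
        ∫⁻ y in badSet β (derivNormFst (p + 1) u) n, ‖fourierFst u (ξ, y)‖ₑ) := by
  set φ := derivNormFst (p + 1) u
  set l := decrRearr volume φ ((β n : ℝ≥0∞) ^ 2)
  set N := eLpNorm (fun y ↦ min (φ y) l) 2
  set I : ℝ → ℝ≥0∞ := fun ξ ↦ ∫⁻ y in badSet β φ n, ‖fourierFst u (ξ, y)‖ₑ
  have hI : Measurable I :=
    (stronglyMeasurable_fourierFst hp.continuous.stronglyMeasurable).enorm.lintegral_prod_right'
  have hcoef : β n ^ 2 * (α n)⁻¹ ^ (2 * p) *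
      (2 * (β n)⁻¹ * (α (n + 1) ^ 2) ^ (p + 1) * (2 * (α n)⁻¹ ^ 2)) ≤
        4 * B ^ (2 * (p + 1)) * β n :=
    calc _ = 4 * ((α n)⁻¹ * α (n + 1)) ^ (2 * (p + 1)) * (β n ^ 2 * (β n)⁻¹) := by ring
      _ = 4 * ((α n)⁻¹ * α (n + 1)) ^ (2 * (p + 1)) * β n := by
        rw [sq, mul_inv_cancel_right₀ (hβ.pos n).ne']
      _ ≤ 4 * B ^ (2 * (p + 1)) * β n := by gcongr; exact hα.inv_mul_succ_le n
  have hcoef' : β n ^ 2 * (α n)⁻¹ ^ (2 * p) * (2 * (β n)⁻¹ ^ 2) = 2 * (α n)⁻¹ ^ (2 * p) :=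
    calc _ = 2 * (α n)⁻¹ ^ (2 * p) * (β n * (β n)⁻¹) ^ 2 := by ring
      _ = 2 * (α n)⁻¹ ^ (2 * p) := by rw [mul_inv_cancel₀ (hβ.pos n).ne', one_pow, mul_one]
  calc _ ≤ ((β n ^ 2 * (α n)⁻¹ ^ (2 * p) : ℝ≥0) : ℝ≥0∞) * (∫⁻ ξ in freqShell α n,
        ((2 * (β n)⁻¹ * (α (n + 1) ^ 2) ^ (p + 1) : ℝ≥0) * N +
          (2 * (β n)⁻¹ ^ 2 : ℝ≥0) * I ξ)) :=
        mul_le_mul_right (setLIntegral_mono' (measurableSet_freqShell α n) fun ξ hξ ↦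
          setLIntegral_freqBall_enorm_fourier_fourierFst_le hp hint (hα.pos _) hξ.2 (β n) l) _
    _ ≤ ((β n ^ 2 * (α n)⁻¹ ^ (2 * p) : ℝ≥0) : ℝ≥0∞) *
          ((2 * (β n)⁻¹ * (α (n + 1) ^ 2) ^ (p + 1) : ℝ≥0) * N * (2 * (α n)⁻¹ ^ 2 : ℝ≥0) +
            (2 * (β n)⁻¹ ^ 2 : ℝ≥0) * ∫⁻ ξ in freqShell α n, I ξ) := by
        rw [lintegral_add_left measurable_const, setLIntegral_const, lintegral_const_mul _ hI]
        gcongr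
        exact (measure_mono sdiff_subset).trans_eq (volume_freqBall _)
    _ = (β n ^ 2 * (α n)⁻¹ ^ (2 * p) *
            (2 * (β n)⁻¹ * (α (n + 1) ^ 2) ^ (p + 1) * (2 * (α n)⁻¹ ^ 2)) : ℝ≥0) * N +
          (β n ^ 2 * (α n)⁻¹ ^ (2 * p) * (2 * (β n)⁻¹ ^ 2) : ℝ≥0) *
            ∫⁻ ξ in freqShell α n, I ξ := by push_cast; ring
    _ ≤ (4 * B ^ (2 * (p + 1)) * β n : ℝ≥0) * N +
          (2 * (α n)⁻¹ ^ (2 * p) : ℝ≥0) * ∫⁻ ξ in freqShell α n, I ξ := by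
        rw [hcoef']
        gcongr
    _ = _ := by push_cast; ring

theorem exists_tsum_mul_setLIntegral_freqShell_freqBall_le (F : Type*) [NormedAddCommGroup F]
    [InnerProductSpace ℂ F] [CompleteSpace F] (hα : IsLacunary B α) (hβ : IsLacunary B β)
    (hαβ : ∀ n, α n ^ (p + 1) = β n ^ (q + 1)) :
    ∃ C : ℝ≥0, ∀ u : ℝ × ℝ → F, ContDiff ℝ (p + 1 : ℕ) u → ContDiff ℝ (q + 1 : ℕ) u →
      Integrable u →
      ∑' n, ((β n ^ 2 * (α n)⁻¹ ^ (2 * p) : ℝ≥0) : ℝ≥0∞) * (∫⁻ ξ in freqShell α n,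
        ∫⁻ η in freqBall (β n), ‖𝓕 (fun y ↦ fourierFst u (ξ, y)) η‖ₑ) ≤
      C * ((∫⁻ y, derivNormFst (p + 1) u y) + ∫⁻ x, derivNormFst (q + 1) (u ∘ Prod.swap) x) := by
  refine ⟨4 * B ^ (2 * (p + 1)) * (4 * B) + 2 * (scaleConst p q B * (2 * B ^ 2 + 4 * B)),
    fun u hp hq hint ↦ ?_⟩
  set φ := derivNormFst (p + 1) u
  set ψ := derivNormFst (q + 1) (u ∘ Prod.swap)
  have hφ : Measurable φ := measurable_derivNormFst hp
  have hlow := tsum_mul_setLIntegral_badSet_le hα hβ hαβ hp hq hint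
  have hgood : ∑' n, (β n : ℝ≥0∞) *
      eLpNorm (fun y ↦ min (φ y) (decrRearr volume φ ((β n : ℝ≥0∞) ^ 2))) 2 ≤
        4 * B * ∫⁻ y, φ y :=
    tsum_mul_eLpNorm_min_decrRearr_le hφ hβ.two_mul_coe_le
      (fun n ↦ ENNReal.coe_ne_zero.mpr (hβ.pos n).ne') (ENNReal.coe_ne_zero.mpr hβ.const_pos.ne')
      fun n ↦ by exact_mod_cast hβ.le_mul n
  refine (ENNReal.tsum_le_tsum fun n ↦
    mul_setLIntegral_freqShell_freqBall_le hα hβ hp hint n).trans ?_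
  rw [ENNReal.tsum_add, ENNReal.tsum_mul_left, ENNReal.tsum_mul_left]
  calc _ ≤ (4 * B ^ (2 * (p + 1)) : ℝ≥0) * (4 * B * ∫⁻ y, φ y) +
        2 * ((scaleConst p q B * (2 * B ^ 2 + 4 * B) : ℝ≥0) * ((∫⁻ y, φ y) + ∫⁻ x, ψ x)) := by
        gcongr
    _ ≤ (4 * B ^ (2 * (p + 1)) : ℝ≥0) * (4 * B * ((∫⁻ y, φ y) + ∫⁻ x, ψ x)) +
        2 * ((scaleConst p q B * (2 * B ^ 2 + 4 * B) : ℝ≥0) * ((∫⁻ y, φ y) + ∫⁻ x, ψ x)) := by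
        gcongr
        exact le_self_add
    _ = _ := by push_cast; ring

end TwoVariables

section Coordinates

variable {m : ℕ}

/-- Coordinates on `EuclideanSpace ℝ (Fin (m + 2))` listing the `i`-th entry first, followed by the
remaining ones in increasing order, the first of which is also singled out. -/
noncomputable def coordSplit (i : Fin (m + 2)) :
    (ℝ × ℝ) × (Fin m → ℝ) ≃ᵐ EuclideanSpace ℝ (Fin (m + 2)) :=
  MeasurableEquiv.prodAssoc.trans <|
  ((MeasurableEquiv.refl ℝ).prodCongr
    (MeasurableEquiv.piFinSuccAbove (fun _ : Fin (m + 1) ↦ ℝ) 0).symm).trans <|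
  (MeasurableEquiv.piFinSuccAbove (fun _ : Fin (m + 2) ↦ ℝ) i).symm.trans <|
  MeasurableEquiv.toLp 2 (Fin (m + 2) → ℝ)

variable (i : Fin (m + 2)) (w w' : (ℝ × ℝ) × (Fin m → ℝ))

@[simp]
lemma coordSplit_apply_self : coordSplit i w i = w.1.1 :=
  Fin.insertNth_apply_same (α := fun _ ↦ ℝ) i w.1.1 _

@[simp]
lemma coordSplit_apply_succAbove_zero : coordSplit i w (i.succAbove 0) = w.1.2 :=
  (Fin.insertNth_apply_succAbove (α := fun _ ↦ ℝ) i w.1.1 _ 0).trans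
    (Fin.insertNth_apply_same (α := fun _ ↦ ℝ) 0 w.1.2 w.2)

@[simp]
lemma coordSplit_apply_succAbove_succ (k : Fin m) :
    coordSplit i w (i.succAbove k.succ) = w.2 k :=
  (Fin.insertNth_apply_succAbove (α := fun _ ↦ ℝ) i w.1.1 _ k.succ).trans
    (Fin.insertNth_apply_succAbove (α := fun _ ↦ ℝ) 0 w.1.2 w.2 k)

lemma measurePreserving_coordSplit : MeasurePreserving (coordSplit i (m := m)) := by
  have hinner := (volume_preserving_piFinSuccAbove (fun _ : Fin (m + 1) ↦ ℝ) 0).symm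
  have houter := (volume_preserving_piFinSuccAbove (fun _ : Fin (m + 2) ↦ ℝ) i).symm
  exact (PiLp.volume_preserving_toLp _).comp <| houter.comp <|
    ((MeasurePreserving.id volume).prod hinner).comp volume_preserving_prodAssoc

lemma continuous_coordSplit : Continuous (coordSplit i (m := m)) := by
  refine (PiLp.continuous_toLp 2 _).comp (continuous_pi fun k ↦ ?_)
  change Continuous fun w ↦ coordSplit i w k
  cases k using i.succAboveCases with
  | x => simpa only [coordSplit_apply_self] using by fun_prop
  | p k =>
    cases k using Fin.cases with
    | zero => simpa only [coordSplit_apply_succAbove_zero] using by fun_prop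
    | succ k => simpa only [coordSplit_apply_succAbove_succ] using by fun_prop

lemma inner_coordSplit : ⟪coordSplit i w, coordSplit i w'⟫ =
    ∑ k, w.2 k * w'.2 k + (w.1.2 * w'.1.2 + w.1.1 * w'.1.1) := by
  simp [PiLp.inner_apply, Fin.sum_univ_succAbove _ i, Fin.sum_univ_succ, mul_comm]
  ring

lemma coordSplit_eq_add_smul_fst (x y : ℝ) (z : Fin m → ℝ) :
    coordSplit i ((x, y), z) = coordSplit i ((0, y), z) + x • EuclideanSpace.single i 1 := by
  ext k
  cases k using i.succAboveCases with
  | x => simp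
  | p k => cases k using Fin.cases <;> simp

lemma coordSplit_eq_add_smul_snd (x y : ℝ) (z : Fin m → ℝ) : coordSplit i ((x, y), z) =
    coordSplit i ((x, 0), z) + y • EuclideanSpace.single (i.succAbove 0) 1 := by
  ext k
  cases k using i.succAboveCases with
  | x => simp
  | p k => cases k using Fin.cases <;> simp

lemma contDiff_coordSplit (n : WithTop ℕ∞) (z : Fin m → ℝ) :
    ContDiff ℝ n fun w : ℝ × ℝ ↦ coordSplit i (w, z) := by
  have h : (fun w : ℝ × ℝ ↦ coordSplit i (w, z)) = fun w : ℝ × ℝ ↦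
      coordSplit i ((0, 0), z) + w.1 • EuclideanSpace.single i (1 : ℝ) +
        w.2 • EuclideanSpace.single (i.succAbove 0) (1 : ℝ) := by
    ext1 ⟨x, y⟩
    rw [coordSplit_eq_add_smul_snd, coordSplit_eq_add_smul_fst]
  rw [h]
  fun_prop

lemma lintegral_eq_lintegral_coordSplit {g : EuclideanSpace ℝ (Fin (m + 2)) → ℝ≥0∞}
    (hg : Measurable g) : ∫⁻ v, g v = ∫⁻ z, ∫⁻ w, g (coordSplit i (w, z)) := by
  rw [← (measurePreserving_coordSplit i).lintegral_comp hg]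
  exact lintegral_prod_symm _ (hg.comp (coordSplit i).measurable).aemeasurable

section Derivative

variable {F : Type*} [NormedAddCommGroup F] [NormedSpace ℝ F]

/-- The `L¹` norm of the `k`-th pure partial derivative in the direction of the `j`-th axis. -/
noncomputable def partialDerivNorm {d : ℕ} (k : ℕ) (j : Fin d)
    (f : EuclideanSpace ℝ (Fin d) → F) : ℝ≥0∞ :=
  ∫⁻ x, ‖iteratedFDeriv ℝ k f x fun _ ↦ EuclideanSpace.single j 1‖ₑ

variable {k : ℕ} {f : EuclideanSpace ℝ (Fin (m + 2)) → F}

lemma continuous_iteratedFDeriv_apply (hf : ContDiff ℝ k f)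
    (e : EuclideanSpace ℝ (Fin (m + 2))) : Continuous fun x ↦ iteratedFDeriv ℝ k f x fun _ ↦ e :=
  (ContinuousMultilinearMap.apply ℝ (fun _ : Fin k ↦ EuclideanSpace ℝ (Fin (m + 2))) F
    fun _ ↦ e).continuous.comp (hf.continuous_iteratedFDeriv le_rfl)

lemma derivNormFst_coordSplit (hf : ContDiff ℝ k f) (y : ℝ) (z : Fin m → ℝ) :
    derivNormFst k (fun w ↦ f (coordSplit i (w, z))) y = ∫⁻ x, ‖iteratedFDeriv ℝ k f
      (coordSplit i ((x, y), z)) fun _ ↦ EuclideanSpace.single i 1‖ₑ := by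
  have hline : (fun x ↦ f (coordSplit i ((x, y), z))) = fun x : ℝ ↦
      f (coordSplit i ((0, y), z) + x • EuclideanSpace.single i 1) :=
    funext fun x ↦ by rw [coordSplit_eq_add_smul_fst]
  refine lintegral_congr fun x ↦ ?_
  rw [hline, iteratedDeriv_comp_add_smul hf, ← coordSplit_eq_add_smul_fst]

lemma derivNormFst_swap_coordSplit (hf : ContDiff ℝ k f) (x : ℝ) (z : Fin m → ℝ) :
    derivNormFst k ((fun w ↦ f (coordSplit i (w, z))) ∘ Prod.swap) x = ∫⁻ y, ‖iteratedFDeriv ℝ k f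
      (coordSplit i ((x, y), z)) fun _ ↦ EuclideanSpace.single (i.succAbove 0) 1‖ₑ := by
  have hline : (fun y ↦ f (coordSplit i ((x, y), z))) = fun y : ℝ ↦
      f (coordSplit i ((x, 0), z) + y • EuclideanSpace.single (i.succAbove 0) 1) :=
    funext fun y ↦ by rw [coordSplit_eq_add_smul_snd]
  refine lintegral_congr fun y ↦ ?_
  simp only [comp_apply, Prod.swap_prod_mk]
  rw [hline, iteratedDeriv_comp_add_smul hf, ← coordSplit_eq_add_smul_snd]

lemma measurable_lintegral_derivNormFst_coordSplit (hf : ContDiff ℝ k f) :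
    Measurable fun z ↦ ∫⁻ y, derivNormFst k (fun w ↦ f (coordSplit i (w, z))) y := by
  simp_rw [derivNormFst_coordSplit i hf]
  have h := (continuous_iteratedFDeriv_apply hf (EuclideanSpace.single i 1)).enorm.comp
    ((continuous_coordSplit i).comp (by fun_prop :
      Continuous fun v : ((Fin m → ℝ) × ℝ) × ℝ ↦ ((v.2, v.1.2), v.1.1)))
  exact h.measurable.lintegral_prod_right'.lintegral_prod_right'

lemma lintegral_lintegral_derivNormFst_coordSplit (hf : ContDiff ℝ k f) :
    ∫⁻ z, ∫⁻ y, derivNormFst k (fun w ↦ f (coordSplit i (w, z))) y = partialDerivNorm k i f := by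
  have hderiv := (continuous_iteratedFDeriv_apply hf (EuclideanSpace.single i 1)).enorm
  simp_rw [derivNormFst_coordSplit i hf]
  rw [partialDerivNorm, lintegral_eq_lintegral_coordSplit i hderiv.measurable]
  exact lintegral_congr fun z ↦ (lintegral_prod_symm _ (hderiv.comp
    (contDiff_coordSplit i 0 z).continuous).measurable.aemeasurable).symm

lemma lintegral_lintegral_derivNormFst_swap_coordSplit (hf : ContDiff ℝ k f) :
    ∫⁻ z, ∫⁻ x, derivNormFst k ((fun w ↦ f (coordSplit i (w, z))) ∘ Prod.swap) x =
      partialDerivNorm k (i.succAbove 0) f := by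
  have hderiv :=
    (continuous_iteratedFDeriv_apply hf (EuclideanSpace.single (i.succAbove 0) 1)).enorm
  simp_rw [derivNormFst_swap_coordSplit i hf]
  rw [partialDerivNorm, lintegral_eq_lintegral_coordSplit i hderiv.measurable]
  exact lintegral_congr fun z ↦ (lintegral_prod _ (hderiv.comp
    (contDiff_coordSplit i 0 z).continuous).measurable.aemeasurable).symm

end Derivative

section Fourier

variable {F : Type*} [NormedAddCommGroup F] [NormedSpace ℂ F]
  {f : EuclideanSpace ℝ (Fin (m + 2)) → F}

/-- The Fourier transform of `f` in its `i`-th variable and in the first of the others. -/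
noncomputable def fourierCoordSplit (i : Fin (m + 2)) (f : EuclideanSpace ℝ (Fin (m + 2)) → F)
    (w : (ℝ × ℝ) × (Fin m → ℝ)) : F :=
  𝓕 (fun y ↦ 𝓕 (fun x ↦ f (coordSplit i ((x, y), w.2))) w.1.1) w.1.2

lemma stronglyMeasurable_fourierCoordSplit (hf : StronglyMeasurable f) :
    StronglyMeasurable (fourierCoordSplit i f) := by
  have hfst : StronglyMeasurable fun v : (ℝ × (Fin m → ℝ)) × ℝ ↦
      𝓕 (fun x ↦ f (coordSplit i ((x, v.1.1), v.1.2))) v.2 :=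
    stronglyMeasurable_fourier
      (u := fun (v : ℝ × (Fin m → ℝ)) x ↦ f (coordSplit i ((x, v.1), v.2))) <| hf.comp_measurable
      (g := fun v : ((ℝ × (Fin m → ℝ)) × ℝ) ↦ coordSplit i ((v.2, v.1.1), v.1.2)) <|
      (coordSplit i).measurable.comp (by fun_prop)
  have hsnd : StronglyMeasurable fun v : (ℝ × (Fin m → ℝ)) × ℝ ↦
      𝓕 (fun y ↦ 𝓕 (fun x ↦ f (coordSplit i ((x, y), v.1.2))) v.1.1) v.2 :=
    stronglyMeasurable_fourier (u := fun (v : ℝ × (Fin m → ℝ)) y ↦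
      𝓕 (fun x ↦ f (coordSplit i ((x, y), v.2))) v.1) <| hfst.comp_measurable
      (g := fun v : ((ℝ × (Fin m → ℝ)) × ℝ) ↦ ((v.2, v.1.2), v.1.1)) (by fun_prop)
  exact hsnd.comp_measurable
    (g := fun w : (ℝ × ℝ) × (Fin m → ℝ) ↦ ((w.1.1, w.2), w.1.2)) (by fun_prop)

lemma enorm_fourier_coordSplit_le (hf : Integrable f) :
    ‖𝓕 f (coordSplit i w)‖ₑ ≤ ∫⁻ z, ‖fourierCoordSplit i f (w.1, z)‖ₑ := by
  set g : (ℝ × ℝ) × (Fin m → ℝ) → F := fun w' ↦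
    Real.fourierChar (-⟪coordSplit i w', coordSplit i w⟫) • f (coordSplit i w')
  have hg : Integrable g :=
    ((measurePreserving_coordSplit i).integrable_comp_emb (coordSplit i).measurableEmbedding).mpr
      ((Real.fourierIntegral_convergent_iff _).mpr hf)
  have hchar (x y : ℝ) (z : Fin m → ℝ) : g ((x, y), z) =
      (Real.fourierChar (-∑ k, z k * w.2 k) : ℂ) • (Real.fourierChar (-(y * w.1.2)) : ℂ) •
        Real.fourierChar (-(x * w.1.1)) • f (coordSplit i ((x, y), z)) := by
    simp only [g, inner_coordSplit, neg_add, AddChar.map_add_eq_mul, mul_smul]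
    rfl
  have hslice : ∀ᵐ z, ∫ p, g (p, z) =
      (Real.fourierChar (-∑ k, z k * w.2 k) : ℂ) • fourierCoordSplit i f (w.1, z) := by
    filter_upwards [hg.prod_left_ae] with z hz
    rw [Measure.volume_eq_prod, integral_prod_symm _ hz, fourierCoordSplit, Real.fourier_real_eq]
    simp_rw [hchar, integral_smul, Real.fourier_real_eq]
    rfl
  calc ‖𝓕 f (coordSplit i w)‖ₑ = ‖∫ w', g w'‖ₑ := by
        rw [Real.fourier_eq, ← (measurePreserving_coordSplit i).integral_comp
          (coordSplit i).measurableEmbedding]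
    _ ≤ ∫⁻ z, ‖∫ p, g (p, z)‖ₑ := by
        rw [Measure.volume_eq_prod, integral_prod_symm _ hg]
        exact enorm_integral_le_lintegral_enorm _
    _ = _ := by
        refine lintegral_congr_ae ?_
        filter_upwards [hslice] with z hz
        rw [hz, enorm_smul, ← ofReal_norm, Circle.norm_coe, ENNReal.ofReal_one, one_mul]

lemma setLIntegral_image_coordSplit_le (hf : Integrable f) (hm : StronglyMeasurable f)
    (A A' : Set ℝ) (Q : Set (Fin m → ℝ)) :
    ∫⁻ v in coordSplit i '' ((A ×ˢ A') ×ˢ Q), ‖𝓕 f v‖ₑ ≤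
      volume Q * ∫⁻ z, ∫⁻ ξ in A, ∫⁻ η in A', ‖fourierCoordSplit i f ((ξ, η), z)‖ₑ := by
  have hmeas := (stronglyMeasurable_fourierCoordSplit i hm).enorm
  rw [← (measurePreserving_coordSplit i).setLIntegral_comp_emb (coordSplit i).measurableEmbedding]
  calc ∫⁻ w in (A ×ˢ A') ×ˢ Q, ‖𝓕 f (coordSplit i w)‖ₑ
      ≤ ∫⁻ w in (A ×ˢ A') ×ˢ Q, ∫⁻ z, ‖fourierCoordSplit i f (w.1, z)‖ₑ :=
        lintegral_mono fun w ↦ enorm_fourier_coordSplit_le i w hf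
    _ = volume Q * ∫⁻ p in A ×ˢ A', ∫⁻ z, ‖fourierCoordSplit i f (p, z)‖ₑ := by
        rw [Measure.volume_eq_prod, ← Measure.prod_restrict]
        refine (lintegral_prod _
          (hmeas.lintegral_prod_right'.comp measurable_fst).aemeasurable).trans ?_
        simp only [comp_apply, lintegral_const, Measure.restrict_apply_univ]
        rw [lintegral_mul_const _ hmeas.lintegral_prod_right', mul_comm]
    _ = _ := by
        rw [lintegral_lintegral_swap hmeas.aemeasurable]
        congr 2 with z
        rw [Measure.volume_eq_prod, ← Measure.prod_restrict]
        exact lintegral_prod _ (hmeas.comp measurable_prodMk_right).aemeasurable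

end Fourier

theorem exists_tsum_setLIntegral_coordSplit_le (F : Type*) [NormedAddCommGroup F]
    [InnerProductSpace ℂ F] [CompleteSpace F] {p q : ℕ} {B : ℝ≥0} {α β : ℤ → ℝ≥0}
    (hα : IsLacunary B α) (hβ : IsLacunary B β) (hαβ : ∀ n, α n ^ (p + 1) = β n ^ (q + 1))
    {Q : ℤ → Set (Fin m → ℝ)} {c : ℝ≥0}
    (hQ : ∀ n, volume (Q n) ≤ (c * (β n ^ 2 * (α n)⁻¹ ^ (2 * p)) : ℝ≥0)) :
    ∃ C : ℝ≥0, ∀ f : EuclideanSpace ℝ (Fin (m + 2)) → F, ContDiff ℝ (p + 1 : ℕ) f →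
      ContDiff ℝ (q + 1 : ℕ) f → Integrable f →
      ∑' n, ∫⁻ v in coordSplit i '' ((freqShell α n ×ˢ freqBall (β n)) ×ˢ Q n), ‖𝓕 f v‖ₑ ≤
        C * (partialDerivNorm (p + 1) i f + partialDerivNorm (q + 1) (i.succAbove 0) f) := by
  obtain ⟨C, hC⟩ := exists_tsum_mul_setLIntegral_freqShell_freqBall_le F hα hβ hαβ
  refine ⟨c * C, fun f hp hq hf ↦ ?_⟩
  set κ : ℤ → ℝ≥0 := fun n ↦ β n ^ 2 * (α n)⁻¹ ^ (2 * p)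
  set J : ℤ → (Fin m → ℝ) → ℝ≥0∞ := fun n z ↦
    ∫⁻ ξ in freqShell α n, ∫⁻ η in freqBall (β n), ‖fourierCoordSplit i f ((ξ, η), z)‖ₑ
  have hfm := hp.continuous.stronglyMeasurable
  have hJ (n : ℤ) : Measurable (J n) := by
    have h := (stronglyMeasurable_fourierCoordSplit i hfm).enorm.comp (by fun_prop :
      Measurable fun v : ((Fin m → ℝ) × ℝ) × ℝ ↦ ((v.1.2, v.2), v.1.1))
    exact h.lintegral_prod_right'.lintegral_prod_right'
  have hslice : ∀ᵐ z, ∑' n, κ n * J n z ≤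
      C * ((∫⁻ y, derivNormFst (p + 1) (fun w ↦ f (coordSplit i (w, z))) y) +
        ∫⁻ x, derivNormFst (q + 1) ((fun w ↦ f (coordSplit i (w, z))) ∘ Prod.swap) x) := by
    have hint := ((measurePreserving_coordSplit i).integrable_comp_emb
      (coordSplit i).measurableEmbedding).mpr hf
    filter_upwards [hint.prod_left_ae] with z hz
    exact hC _ (hp.comp (contDiff_coordSplit i _ z)) (hq.comp (contDiff_coordSplit i _ z)) hz
  calc _ ≤ ∑' n, c * (κ n * ∫⁻ z, J n z) :=
        ENNReal.tsum_le_tsum fun n ↦ (setLIntegral_image_coordSplit_le i hf hfm _ _ _).trans <|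
          (mul_le_mul_left (hQ n) _).trans_eq (by rw [ENNReal.coe_mul, mul_assoc])
    _ = c * ∫⁻ z, ∑' n, κ n * J n z := by
        rw [ENNReal.tsum_mul_left, lintegral_tsum fun n ↦ ((hJ n).const_mul _).aemeasurable]
        simp_rw [lintegral_const_mul _ (hJ _)]
    _ ≤ c * (C * ((∫⁻ z, ∫⁻ y, derivNormFst (p + 1) (fun w ↦ f (coordSplit i (w, z))) y) +
          ∫⁻ z, ∫⁻ x,
            derivNormFst (q + 1) ((fun w ↦ f (coordSplit i (w, z))) ∘ Prod.swap) x)) := by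
        refine mul_le_mul_right ((lintegral_mono_ae hslice).trans_eq ?_) _
        rw [lintegral_const_mul' _ _ ENNReal.coe_ne_top,
          lintegral_add_left (measurable_lintegral_derivNormFst_coordSplit i hp)]
    _ = _ := by
        rw [lintegral_lintegral_derivNormFst_coordSplit i hp,
          lintegral_lintegral_derivNormFst_swap_coordSplit i hq, ENNReal.coe_mul, mul_assoc]

end Coordinates

section AnisotropicDilations

variable {d : ℕ} {r : Fin d → ℕ} {a : Fin d → ℝ≥0} {B : ℝ≥0}

/-- `x ↦ (a₁ x₁, …, a_d x_d)` is an expanding dilation scaling every pure derivative of order `r k`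
in the `k`-th variable by the same factor `B`, which is also its Jacobian. -/
structure IsAnisotropicDilation (r : Fin d → ℕ) (a : Fin d → ℝ≥0) (B : ℝ≥0) : Prop where
  two_le (k : Fin d) : 2 ≤ a k
  pow_eq (k : Fin d) : a k ^ r k = B
  prod_eq : ∏ k, a k = B

lemma exists_isAnisotropicDilation (hr : ∀ k, 0 < r k) (hsum : ∑ k, (1 : ℝ) / r k = 1) :
    ∃ a B, IsAnisotropicDilation r a B := by
  refine ⟨fun k ↦ 2 ^ ((∑ j, r j : ℕ) * (1 / r k : ℝ)), 2 ^ ∑ j, r j,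
    fun k ↦ ?_, fun k ↦ ?_, ?_⟩
  · have hrk : (r k : ℝ) ≤ (∑ j, r j : ℕ) := by
      exact_mod_cast Finset.single_le_sum (fun _ _ ↦ Nat.zero_le _) (Finset.mem_univ k)
    have hexp : 1 ≤ (∑ j, r j : ℕ) * (1 / r k : ℝ) := by
      rwa [mul_one_div, one_le_div (by exact_mod_cast hr k)]
    simpa only [NNReal.rpow_one] using NNReal.rpow_le_rpow_of_exponent_le one_le_two hexp
  · have hrk : (r k : ℝ) ≠ 0 := by exact_mod_cast (hr k).ne'
    rw [← NNReal.rpow_mul_natCast, mul_assoc, one_div_mul_cancel hrk, mul_one,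
      NNReal.rpow_natCast]
  · apply NNReal.eq
    push_cast
    rw [← Real.rpow_sum_of_pos two_pos, ← Finset.mul_sum, hsum, mul_one, ← Nat.cast_sum,
      Real.rpow_natCast]

/-- The frequencies in the `n`-th dilate of the cube `[-1, 1]^d` but not, as regards their `i`-th
entry, in the next one. -/
def freqPiece (a : Fin d → ℝ≥0) (i : Fin d) (n : ℤ) : Set (EuclideanSpace ℝ (Fin d)) :=
  {v | v i ∈ freqShell (a i ^ ·) n ∧ ∀ k, v k ∈ freqBall (a k ^ n)}

lemma exists_mem_freqShell {a : ℝ≥0} (ha : 1 < a) {ξ : ℝ} (hξ : ξ ≠ 0) :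
    ∃ n : ℤ, ξ ∈ freqShell (a ^ ·) n := by
  obtain ⟨n, hn, hn'⟩ := exists_mem_Ioc_zpow (x := ‖ξ‖₊) (nnnorm_pos.mpr hξ)
    (one_lt_pow₀ ha two_ne_zero)
  have hmem (k : ℤ) : ξ ∈ freqBall (a ^ k) ↔ ‖ξ‖₊ ≤ (a ^ 2) ^ (-k) := by
    rw [freqBall, mem_closedBall_zero_iff, ← coe_nnnorm, ← NNReal.coe_pow, NNReal.coe_le_coe,
      ← zpow_neg, ← zpow_natCast, ← zpow_natCast, zpow_comm]
  refine ⟨-(n + 1), (hmem _).mpr (by rwa [neg_neg]), fun h ↦ hn.not_ge ?_⟩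
  simpa only [neg_add_rev, neg_add_cancel_comm, neg_neg] using (hmem _).mp h

namespace IsAnisotropicDilation

lemma one_lt (h : IsAnisotropicDilation r a B) (k : Fin d) : 1 < a k :=
  one_lt_two.trans_le (h.two_le k)

lemma pos (h : IsAnisotropicDilation r a B) (k : Fin d) : 0 < a k := one_pos.trans (h.one_lt k)

lemma isLacunary (h : IsAnisotropicDilation r a B) (hr : ∀ k, 0 < r k) (k : Fin d) :
    IsLacunary B fun n ↦ a k ^ n where
  pos n := zpow_pos (h.pos k) n
  two_mul_le n := by
    rw [zpow_add_one₀ (h.pos k).ne', mul_comm]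
    exact mul_le_mul_right (h.two_le k) _
  le_mul n := by
    rw [zpow_add_one₀ (h.pos k).ne', mul_comm, ← h.pow_eq k]
    exact mul_le_mul_left (le_self_pow (h.one_lt k).le (hr k).ne') _

lemma zpow_pow_eq (h : IsAnisotropicDilation r a B) (k : Fin d) (n : ℤ) :
    (a k ^ n) ^ r k = B ^ n := by
  rw [← h.pow_eq k, ← zpow_natCast, ← zpow_natCast, zpow_comm]

lemma exists_mem_freqPiece (h : IsAnisotropicDilation r a B) {v : EuclideanSpace ℝ (Fin d)}
    (hv : v ≠ 0) : ∃ i n, v ∈ freqPiece a i n := by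
  have hshell (k : Fin d) : ∃ n : ℤ, v k ≠ 0 → v k ∈ freqShell (a k ^ ·) n := by
    by_cases hk : v k = 0
    · exact ⟨0, fun hk' ↦ absurd hk hk'⟩
    · exact (exists_mem_freqShell (h.one_lt k) hk).imp fun n hn _ ↦ hn
  choose n hn using hshell
  obtain ⟨j, hj⟩ : ∃ j, v j ≠ 0 := by
    by_contra! hzero
    exact hv (PiLp.ext hzero)
  obtain ⟨i, hi, hmin⟩ := Finset.exists_min_image {k | v k ≠ 0} n ⟨j, by simpa using hj⟩
  simp only [Finset.mem_filter_univ] at hi hmin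
  refine ⟨i, n i, hn i hi, fun k ↦ ?_⟩
  by_cases hk : v k = 0
  · rw [hk]
    exact mem_closedBall_self (by positivity)
  · have hmono : a k ^ n i ≤ a k ^ n k := zpow_le_zpow_right₀ (h.one_lt k).le (hmin k hk)
    exact freqBall_subset (zpow_pos (h.pos k) _) hmono (hn k hk).1

lemma volume_pi_freqBall {m : ℕ} {r : Fin (m + 2) → ℕ} {a : Fin (m + 2) → ℝ≥0}
    (h : IsAnisotropicDilation r a B) {i : Fin (m + 2)} {p : ℕ} (hp : r i = p + 1) (n : ℤ) :
    volume (univ.pi fun k : Fin m ↦ freqBall (a (i.succAbove k.succ) ^ n)) =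
      (2 ^ m * ((a (i.succAbove 0) ^ n) ^ 2 * (a i ^ n)⁻¹ ^ (2 * p)) : ℝ≥0) := by
  have hprod : a (i.succAbove 0) * ∏ k : Fin m, a (i.succAbove k.succ) = a i ^ p := by
    refine mul_left_cancel₀ (h.pos i).ne' ?_
    rw [← pow_succ', ← hp, h.pow_eq, ← h.prod_eq, Fin.prod_univ_succAbove _ i,
      Fin.prod_univ_succ]
  have hrest : ∏ k : Fin m, a (i.succAbove k.succ) = (a (i.succAbove 0))⁻¹ * a i ^ p := by
    rw [← hprod, inv_mul_cancel_left₀ (h.pos _).ne']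
  rw [volume_pi_pi]
  simp_rw [volume_freqBall]
  rw [← ENNReal.ofNNReal_finsetProd, Finset.prod_mul_distrib, Finset.prod_pow,
    Finset.prod_inv_distrib, Finset.prod_zpow, hrest, Finset.prod_const, Finset.card_univ,
    Fintype.card_fin]
  congr 2
  rw [mul_zpow, inv_zpow, mul_inv_rev, inv_inv, mul_pow, mul_comm, pow_mul', inv_pow,
    inv_pow (a i ^ n) p, inv_pow, ← zpow_natCast (a i), zpow_comm, zpow_natCast]

lemma exists_tsum_setLIntegral_freqPiece_le {m : ℕ} {r : Fin (m + 2) → ℕ}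
    {a : Fin (m + 2) → ℝ≥0} (h : IsAnisotropicDilation r a B) (hr : ∀ k, 0 < r k)
    (i : Fin (m + 2)) (F : Type*) [NormedAddCommGroup F] [InnerProductSpace ℂ F]
    [CompleteSpace F] :
    ∃ C : ℝ≥0, ∀ f : EuclideanSpace ℝ (Fin (m + 2)) → F, (∀ j, ContDiff ℝ (r j) f) →
      Integrable f →
      ∑' n, ∫⁻ v in freqPiece a i n, ‖𝓕 f v‖ₑ ≤ C * ∑ j, partialDerivNorm (r j) j f := by
  set i' : Fin (m + 2) := i.succAbove 0
  obtain ⟨p, hp⟩ := Nat.exists_eq_add_of_le' (hr i)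
  obtain ⟨q, hq⟩ := Nat.exists_eq_add_of_le' (hr i')
  obtain ⟨C, hC⟩ := exists_tsum_setLIntegral_coordSplit_le i F (h.isLacunary hr i)
    (h.isLacunary hr i') (q := q) (fun n ↦ by rw [← hp, ← hq, h.zpow_pow_eq, h.zpow_pow_eq])
    (fun n ↦ (h.volume_pi_freqBall hp n).le)
  refine ⟨C, fun f hf hint ↦ (ENNReal.tsum_le_tsum fun n ↦ lintegral_mono_set ?_).trans
    ((hC f (hp ▸ hf i) (hq ▸ hf i') hint).trans (mul_le_mul_right ?_ _))⟩
  · intro v hv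
    obtain ⟨w, rfl⟩ := (coordSplit i).surjective v
    exact mem_image_of_mem _ ⟨⟨by simpa using hv.1, by simpa [i'] using hv.2 i'⟩,
      fun k _ ↦ by simpa using hv.2 (i.succAbove k.succ)⟩
  · rw [← hp, ← hq,
      ← Finset.sum_pair (f := fun j ↦ partialDerivNorm (r j) j f) (i.succAbove_ne 0).symm]
    exact Finset.sum_le_sum_of_subset (Finset.subset_univ _)

end IsAnisotropicDilation

theorem exists_lintegral_enorm_fourier_le {m : ℕ} {r : Fin (m + 2) → ℕ} (hr : ∀ k, 0 < r k)
    (hsum : ∑ k, (1 : ℝ) / r k = 1) (F : Type*) [NormedAddCommGroup F] [InnerProductSpace ℂ F]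
    [CompleteSpace F] :
    ∃ C : ℝ≥0, ∀ f : EuclideanSpace ℝ (Fin (m + 2)) → F, (∀ j, ContDiff ℝ (r j) f) →
      Integrable f → ∫⁻ ξ, ‖𝓕 f ξ‖ₑ ≤ C * ∑ j, partialDerivNorm (r j) j f := by
  obtain ⟨a, B, h⟩ := exists_isAnisotropicDilation hr hsum
  choose C hC using fun i ↦ h.exists_tsum_setLIntegral_freqPiece_le hr i F
  refine ⟨∑ i, C i, fun f hf hint ↦ ?_⟩
  have hcover : ∀ᵐ ξ, ξ ∈ ⋃ i, ⋃ n, freqPiece a i n := by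
    filter_upwards [Measure.ae_ne volume (0 : EuclideanSpace ℝ (Fin (m + 2)))] with ξ hξ
    simpa only [mem_iUnion] using h.exists_mem_freqPiece hξ
  calc ∫⁻ ξ, ‖𝓕 f ξ‖ₑ = ∫⁻ ξ in ⋃ i, ⋃ n, freqPiece a i n, ‖𝓕 f ξ‖ₑ := by
        rw [Measure.restrict_eq_self_of_ae_mem hcover]
    _ ≤ ∑ i, ∑' n, ∫⁻ ξ in freqPiece a i n, ‖𝓕 f ξ‖ₑ := by
        rw [← tsum_fintype (L := .unconditional _)]
        exact (lintegral_iUnion_le _ _).trans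
          (ENNReal.tsum_le_tsum fun i ↦ lintegral_iUnion_le _ _)
    _ ≤ ∑ i, C i * ∑ j, partialDerivNorm (r j) j f :=
        Finset.sum_le_sum fun i _ ↦ hC i f hf hint
    _ = _ := by rw [ENNReal.ofNNReal_finsetSum, Finset.sum_mul]

end AnisotropicDilations

section Rescaling

lemma lintegral_comp_smul {E : Type*} [NormedAddCommGroup E] [NormedSpace ℝ E]
    [MeasurableSpace E] [BorelSpace E] [FiniteDimensional ℝ E] (μ : Measure E)
    [μ.IsAddHaarMeasure] {R : ℝ} (hR : R ≠ 0) (g : E → ℝ≥0∞) :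
    ∫⁻ x, g (R • x) ∂μ = ENNReal.ofReal |(R ^ Module.finrank ℝ E)⁻¹| * ∫⁻ x, g x ∂μ := by
  rw [← smul_eq_mul, ← lintegral_smul_measure, ← Measure.map_addHaar_smul μ hR]
  exact (lintegral_map_equiv g (Homeomorph.smulOfNeZero R hR).toMeasurableEquiv).symm

lemma integral_exp_inner_smul_eq_fourier {d : ℕ} {F : Type*} [NormedAddCommGroup F]
    [NormedSpace ℂ F] (f : EuclideanSpace ℝ (Fin d) → F) (ξ : EuclideanSpace ℝ (Fin d)) :
    ∫ x, Complex.exp (-(Complex.I * (⟪x, ξ⟫ : ℝ))) • f x = 𝓕 f ((2 * Real.pi)⁻¹ • ξ) := by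
  rw [Real.fourier_eq']
  congr 1 with x
  congr 2
  rw [inner_smul_right]
  push_cast
  field_simp

end Rescaling

theorem stmt_12_general (d : ℕ) (hd : 2 ≤ d) (r : Fin d → ℕ) (hr : ∀ i, 0 < r i)
    (hsum : ∑ i, (1 : ℝ) / (r i) = 1) (F : Type*) [NormedAddCommGroup F]
    [InnerProductSpace ℂ F] [CompleteSpace F] :
    ∃ C : ℝ, ∀ f : EuclideanSpace ℝ (Fin d) → F,
      ContDiff ℝ ((Finset.univ.sup r : ℕ) : ℕ∞) f → Integrable f →
      (∀ j, Integrable fun x ↦ iteratedFDeriv ℝ (r j) f x fun _ ↦ EuclideanSpace.single j 1) →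
      ∫⁻ ξ, ‖∫ x, Complex.exp (-(Complex.I * (⟪x, ξ⟫ : ℝ))) • f x‖ₑ ≤
        ENNReal.ofReal (C * ∑ j,
          ∫ x, ‖iteratedFDeriv ℝ (r j) f x fun _ ↦ EuclideanSpace.single j 1‖) := by
  obtain ⟨m, rfl⟩ := Nat.exists_eq_add_of_le' hd
  obtain ⟨C, hC⟩ := exists_lintegral_enorm_fourier_le hr hsum F
  set κ : ℝ := |((2 * Real.pi)⁻¹ ^ (m + 2))⁻¹|
  refine ⟨κ * C, fun f hf hint hderiv ↦ ?_⟩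
  have hfr (j : Fin (m + 2)) : ContDiff ℝ (r j) f :=
    hf.of_le (by exact_mod_cast Finset.le_sup (Finset.mem_univ j))
  have hnorm : ENNReal.ofReal (∑ j,
      ∫ x, ‖iteratedFDeriv ℝ (r j) f x fun _ ↦ EuclideanSpace.single j 1‖) =
      ∑ j, partialDerivNorm (r j) j f := by
    rw [ENNReal.ofReal_sum_of_nonneg fun j _ ↦ integral_nonneg fun x ↦ norm_nonneg _]
    exact Finset.sum_congr rfl fun j _ ↦ ofReal_integral_norm_eq_lintegral_enorm (hderiv j)
  calc ∫⁻ ξ, ‖∫ x, Complex.exp (-(Complex.I * (⟪x, ξ⟫ : ℝ))) • f x‖ₑ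
      = ENNReal.ofReal κ * ∫⁻ ξ, ‖𝓕 f ξ‖ₑ := by
        simp_rw [integral_exp_inner_smul_eq_fourier]
        rw [lintegral_comp_smul volume (by positivity) fun ξ ↦ ‖𝓕 f ξ‖ₑ,
          finrank_euclideanSpace_fin]
    _ ≤ ENNReal.ofReal κ * (C * ∑ j, partialDerivNorm (r j) j f) := by
        gcongr
        exact hC f hfr hint
    _ = _ := by
        rw [← hnorm, ← ENNReal.ofReal_coe_nnreal, ← mul_assoc,
          ← ENNReal.ofReal_mul (abs_nonneg _), ← ENNReal.ofReal_mul (by positivity)]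

/-- Kolyada-type inequality: `‖f̂‖_{L¹} ≤ C ∑_j ‖∂^{r_j}f/∂x_j^{r_j}‖_{L¹}` whenever
`∑ 1/r_j = 1`. -/
theorem stmt_12 (d : ℕ) (hd : 2 ≤ d) (r : Fin d → ℕ) (hr : ∀ i, 0 < r i)
    (hsum : ∑ i, (1 : ℝ) / (r i) = 1) :
    ∃ C : ℝ, ∀ f : EuclideanSpace ℝ (Fin d) → ℂ,
      ContDiff ℝ ((Finset.univ.sup r : ℕ) : ℕ∞) f →
      Integrable f →
      (∀ j : Fin d,
        Integrable (fun x : EuclideanSpace ℝ (Fin d) =>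
          iteratedFDeriv ℝ (r j) f x (fun _ => EuclideanSpace.single j (1 : ℝ)))) →
      (∫⁻ ξ : EuclideanSpace ℝ (Fin d),
          (‖∫ x : EuclideanSpace ℝ (Fin d),
              Complex.exp (-(Complex.I * (⟪x, ξ⟫ : ℝ))) * f x‖₊ : ℝ≥0∞)) ≤
        ENNReal.ofReal
          (C * ∑ j : Fin d,
            ∫ x : EuclideanSpace ℝ (Fin d),
              ‖iteratedFDeriv ℝ (r j) f x (fun _ => EuclideanSpace.single j (1 : ℝ))‖) :=
  stmt_12_general d hd r hr hsum ℂ
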